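/- arXiv:1102.5117 — 11 statements merged into one kernel-verified Lean document; each statement's English description precedes it below -/
import Mathlib

section
/- Let n ≥ 1 and let A be a real n×n matrix all of whose columns sum to zero, i.e. ∑_{i=1}^n A_{ij} = 0 for every j ∈ {1,…,n}. Let A^{11} denote the (n−1)×(n−1) matrix obtained from A by deleting the first row and the first column. Then det A^{11} = ∑_T ∏_{ℓ∈T} (−A_{i_ℓ j_ℓ}), where the sum ranges over all spanning trees T of the complete graph on the vertex set {1,…,n}, each tree being oriented away from the root vertex 1, and where an edge ℓ of T directed from i_ℓ (the endpoint nearer the root) to j_ℓ contributes the factor −A_{i_ℓ j_ℓ}. -/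
/-!
Column `j` of `A¹¹` is `∑ᵢ (-A i j) (e_j - e_i)`, with the convention that the basis vector of the
root is zero: the `e_j` terms cancel because the column of `A` sums to zero. Expanding the
determinant multilinearly over the columns turns `det A¹¹` into a sum over all functions `p` sending
each non-root vertex to a vertex, weighted by `∏ᵥ (-A (p v) v)` times `det (1 - M)`, where `M` is
the 0-1 matrix of `p` on the non-root vertices. This last determinant is `1` or `0`:
* if every vertex is eventually sent to the root, then `M` is nilpotent, so `det (1 - M) = 1`;
* otherwise the indicator function of the vertices that never reach the root is a nonzero vector
  in the kernel of `1 - M`.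
-/

/-- The 0-1 matrix of `p`, restricted to the vertices other than the root `0`. -/
def parentMatrix {n : ℕ} (p : Fin (n + 1) → Fin (n + 1)) : Matrix (Fin n) (Fin n) ℝ :=
  Matrix.of fun v u => if p v.succ = u.succ then 1 else 0

/-- The parent matrix sends a function vanishing at the root to its composition with `p`. -/
lemma parentMatrix_mulVec {n : ℕ} (p : Fin (n + 1) → Fin (n + 1)) (f : Fin (n + 1) → ℝ)
    (hf : f 0 = 0) (v : Fin n) :
    (parentMatrix p).mulVec (fun u => f u.succ) v = f (p v.succ) := by
  simp only [Matrix.mulVec, dotProduct, parentMatrix, Matrix.of_apply]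
  rcases Fin.eq_zero_or_eq_succ (p v.succ) with h | ⟨w, h⟩
  · simp [h, hf, (Fin.succ_ne_zero _).symm]
  · simp [h]

lemma parentMatrix_pow_mulVec {n : ℕ} (p : Fin (n + 1) → Fin (n + 1)) (hp : p 0 = 0)
    (k : ℕ) (f : Fin (n + 1) → ℝ) (hf : f 0 = 0) (v : Fin n) :
    (parentMatrix p ^ k).mulVec (fun u => f u.succ) v = f (p^[k] v.succ) := by
  induction k generalizing f with
  | zero => simp
  | succ k ih =>
    rw [pow_succ, ← Matrix.mulVec_mulVec, funext (parentMatrix_mulVec p f hf),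
      ih (fun x => f (p x)) (by simp [hp, hf]), Function.iterate_succ_apply']

/-- By pigeonhole, a vertex that reaches the root does so within `n + 1` steps. -/
lemma exists_iterate_le {n : ℕ} (p : Fin (n + 1) → Fin (n + 1)) (v : Fin (n + 1))
    (h : ∃ k, p^[k] v = 0) : ∃ k ≤ n + 1, p^[k] v = 0 := by
  classical
  refine ⟨Nat.find h, ?_, Nat.find_spec h⟩
  by_contra! hlt
  obtain ⟨i, j, hne, hij⟩ := Fintype.exists_ne_map_eq_of_card_lt
    (fun i : Fin (Nat.find h) => p^[i] v) (by simpa using hlt)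
  wlog hlt' : i < j generalizing i j
  · exact this j i hne.symm hij.symm (lt_of_le_of_ne (not_lt.mp hlt') hne.symm)
  -- A repetition before the first visit to the root would give an earlier visit.
  refine Nat.find_min h (m := Nat.find h - j + i) (by have := j.2; omega) ?_
  have hj : Nat.find h - j + j = Nat.find h := by have := j.2; omega
  rw [Function.iterate_add_apply]
  have e : p^[(i : ℕ)] v = p^[(j : ℕ)] v := hij
  rw [e, ← Function.iterate_add_apply, hj]
  exact Nat.find_spec h

lemma det_one_sub_of_isNilpotent {n : ℕ} (M : Matrix (Fin n) (Fin n) ℝ) (hM : IsNilpotent M) :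
    (1 - M).det = 1 := by
  have h := Matrix.isNilpotent_charpoly_sub_pow_of_isNilpotent hM
  have h' : M.charpoly = Polynomial.X ^ n := by simpa [sub_eq_zero] using h.eq_zero
  have := Matrix.eval_charpoly M 1
  rw [h'] at this
  simpa using this.symm

/-- The determinant detects whether `p` encodes a tree directed away from the root. -/
lemma det_one_sub_parentMatrix {n : ℕ} (p : Fin (n + 1) → Fin (n + 1)) (hp : p 0 = 0) :
    (1 - parentMatrix p).det = if ∀ v, ∃ k ≤ n + 1, p^[k] v = 0 then 1 else 0 := by
  classical
  split_ifs with h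
  · apply det_one_sub_of_isNilpotent
    refine ⟨n + 1, ?_⟩
    ext v u
    have h0 : p^[n + 1] v.succ = 0 := by
      obtain ⟨k, hk, hv⟩ := h v.succ
      obtain ⟨m, hm⟩ := Nat.exists_eq_add_of_le' hk
      have e : p^[n + 1] v.succ = p^[m + k] v.succ := congrArg (fun t => p^[t] v.succ) hm
      rw [e, Function.iterate_add_apply, hv, Function.iterate_fixed hp]
    have := parentMatrix_pow_mulVec p hp (n + 1) (Pi.single u.succ 1) (by simp) v
    rw [h0] at this
    have e : (fun w : Fin n => (Pi.single u.succ 1 : Fin (n + 1) → ℝ) w.succ)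
        = Pi.single u 1 := by
      ext w; simp [Pi.single_apply]
    rw [e] at this
    simpa using this
  · push Not at h
    obtain ⟨v, hv⟩ := h
    have hv' : ¬ ∃ k, p^[k] v = 0 := fun hk => by
      obtain ⟨k, hk, e⟩ := exists_iterate_le p v hk
      exact hv k hk e
    let f : Fin (n + 1) → ℝ := fun x => if ∃ k, p^[k] x = 0 then 0 else 1
    have hf0 : f 0 = 0 := if_pos ⟨0, rfl⟩
    have hfp : ∀ x, f (p x) = f x := by
      intro x
      have : (∃ k, p^[k] (p x) = 0) ↔ ∃ k, p^[k] x = 0 := by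
        constructor
        · rintro ⟨k, hk⟩
          exact ⟨k + 1, hk⟩
        · rintro ⟨k, hk⟩
          refine ⟨k, ?_⟩
          rw [← Function.iterate_succ_apply, Function.iterate_succ_apply', hk, hp]
      simp only [f, this]
    apply Matrix.exists_mulVec_eq_zero_iff.mp
    refine ⟨fun u => f u.succ, ?_, ?_⟩
    · rcases Fin.eq_zero_or_eq_succ v with rfl | ⟨w, rfl⟩
      · exact absurd ⟨0, rfl⟩ hv'
      · intro hz
        have := congrFun hz w
        simp [f, if_neg hv'] at this
    · ext w
      simp [Matrix.sub_mulVec, parentMatrix_mulVec p f hf0, hfp]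

/-- Multilinear expansion of the determinant over the choices of a parent for each vertex. -/
lemma det_eq_sum_parentMatrix {n : ℕ} (A : Matrix (Fin (n + 1)) (Fin (n + 1)) ℝ)
    (hcol : ∀ j, ∑ i, A i j = 0) :
    (A.submatrix Fin.succ Fin.succ).det = ∑ q : Fin n → Fin (n + 1),
      (∏ v, -A (q v) v.succ) * (1 - parentMatrix (Fin.cons 0 q)).det := by
  have hrow : (A.submatrix Fin.succ Fin.succ).transpose = fun v : Fin n =>
      ∑ i : Fin (n + 1), (-A i v.succ) • (fun u : Fin n =>
        ((1 : Matrix (Fin n) (Fin n) ℝ) v u - if i = u.succ then 1 else 0 : ℝ)) := by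
    ext v u
    simp [mul_sub, ← Finset.sum_mul, hcol]
  rw [← Matrix.det_transpose, hrow]
  change (Matrix.detRowAlternating (R := ℝ) (n := Fin n)).toMultilinearMap _ = _
  rw [MultilinearMap.map_sum]
  refine Finset.sum_congr rfl fun q _ => ?_
  rw [MultilinearMap.map_smul_univ, smul_eq_mul]
  rfl


/-- **Tree Matrix Theorem.** Let `A` be a real `(n+1) × (n+1)` matrix all of whose columns
sum to zero. Let `A¹¹` be the matrix obtained by deleting the first row and column. Then
`det A¹¹` equals the sum over all spanning trees of the complete graph on the vertices,
directed away from the root vertex `0` (encoded as parent functions `p` with `p 0 = 0` such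
that iterating `p` from any vertex reaches the root), of the product over the tree edges
(from the parent `p v` to the child `v ≠ 0`) of the factors `-A (p v) v`. -/
theorem tree_matrix_theorem (n : ℕ)
    (A : Matrix (Fin (n + 1)) (Fin (n + 1)) ℝ)
    (hcol : ∀ j, ∑ i, A i j = 0) :
    Matrix.det (A.submatrix Fin.succ Fin.succ) =
      ∑ p ∈ Finset.univ.filter
          (fun p : Fin (n + 1) → Fin (n + 1) =>
            p 0 = 0 ∧ ∀ v, ∃ k ≤ n + 1, p^[k] v = 0),
        ∏ v : Fin n, (-A (p v.succ) v.succ) := by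
  rw [det_eq_sum_parentMatrix A hcol]
  have key : ∀ q : Fin n → Fin (n + 1),
      (∏ v, -A (q v) v.succ) * (1 - parentMatrix (Fin.cons 0 q)).det =
      if ∀ v, ∃ k ≤ n + 1, (Fin.cons 0 q : Fin (n + 1) → Fin (n + 1))^[k] v = 0 then
        ∏ v, -A (q v) v.succ else 0 := by
    intro q
    rw [det_one_sub_parentMatrix _ (Fin.cons_zero _ _), mul_ite, mul_one, mul_zero]
  rw [Finset.sum_congr rfl fun q _ => key q, ← Finset.sum_filter]
  refine Finset.sum_bij' (fun q _ => (Fin.cons 0 q : Fin (n + 1) → Fin (n + 1)))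
    (fun p _ => Fin.tail p) ?_ ?_ ?_ ?_ ?_
  · intro q hq
    exact Finset.mem_filter.mpr ⟨Finset.mem_univ _, Fin.cons_zero _ _, (Finset.mem_filter.mp hq).2⟩
  · intro p hp
    obtain ⟨-, h0, h⟩ := Finset.mem_filter.mp hp
    refine Finset.mem_filter.mpr ⟨Finset.mem_univ _, ?_⟩
    rwa [← h0, Fin.cons_self_tail, h0]
  · intro q _
    exact Fin.tail_cons _ _
  · intro p hp
    obtain ⟨-, h0, h⟩ := Finset.mem_filter.mp hp
    change Fin.cons 0 (Fin.tail p) = p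
    conv_lhs => rw [← h0]
    exact Fin.cons_self_tail p
  · intro q _
    simp
end

section
/- Let n ≥ 1, let F be a forest on the vertex set {1,…,n} (a subset of unordered pairs containing no cycle), and let w = (w_ℓ)_{ℓ∈F} ∈ [0,1]^F. Define the n×n real symmetric matrix X^F(w) by X^F_{ii}(w) = 1, and for i ≠ j: X^F_{ij}(w) = min of w_{ℓ'} over the edges ℓ' of the unique path in F joining i to j if i and j lie in the same connected component of F, and X^F_{ij}(w) = 0 otherwise. Then X^F(w) is positive semidefinite. -/
/-!
The matrix `X` is ultrametric: concatenating a walk from `i` to `k` with one from `k` to `j`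
and extracting a path gives `min (X i k) (X k j) ≤ X i j`, and `X` is symmetric with
nonnegative entries. Every such matrix is positive semidefinite
(`Matrix.posSemidef_of_ultrametric`): for each `t > 0` the relation `t ≤ X i j` is transitive
and symmetric, its indicator matrix is a Gram matrix, and `X` is a nonnegative combination of
these indicator matrices (a discrete layer-cake decomposition, carried out by removing the
smallest nonzero value of `X` one at a time).
-/

/-- The indicator matrix of a partial equivalence relation is the Gram matrix of the indicator
vectors of its classes. The relation need not be reflexive: an index not related to itself
contributes a zero row and column. -/
theorem Matrix.posSemidef_indicator {ι : Type*} [Fintype ι]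
    (r : ι → ι → Prop) [DecidableRel r]
    (hs : ∀ i j, r i j → r j i) (ht : ∀ i j k, r i j → r j k → r i k) :
    (Matrix.of fun i j => if r i j then (1 : ℝ) else 0).PosSemidef := by
  classical
  -- The classes are indexed by the subsets `{k | r i k}` of `ι`.
  let c : ι → Finset ι := fun i => Finset.univ.filter (r i)
  let B : Matrix (Finset ι) ι ℝ := Matrix.of fun s i => if r i i ∧ s = c i then 1 else 0
  have hB : (Matrix.of fun i j => if r i j then (1 : ℝ) else 0) = B.conjTranspose * B := by
    ext i j
    have key : r i j ↔ r i i ∧ r j j ∧ c i = c j := by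
      constructor
      · intro h
        refine ⟨ht _ _ _ h (hs _ _ h), ht _ _ _ (hs _ _ h) h, ?_⟩
        ext k
        simp only [c, Finset.mem_filter, Finset.mem_univ, true_and]
        exact ⟨fun h' => ht _ _ _ (hs _ _ h) h', fun h' => ht _ _ _ h h'⟩
      · rintro ⟨-, hj, hc⟩
        have : j ∈ c i := by rw [hc]; simpa [c] using hj
        simpa [c] using this
    have hsum : (B.conjTranspose * B) i j
        = ∑ s, if s = c i then (if r i i ∧ r j j ∧ c i = c j then (1 : ℝ) else 0) else 0 := by
      simp only [Matrix.mul_apply, Matrix.conjTranspose_apply, B, Matrix.of_apply, star_trivial]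
      refine Finset.sum_congr rfl fun s _ => ?_
      by_cases h1 : s = c i
      · subst h1
        by_cases h2 : r i i <;> simp [h2]
      · simp [h1]
    rw [hsum, Finset.sum_ite_eq' Finset.univ (c i)]
    simp only [Matrix.of_apply, Finset.mem_univ, if_true, key]
  rw [hB]
  exact Matrix.posSemidef_conjTranspose_mul_self B

/-- A symmetric nonnegative matrix satisfying the (reversed) ultrametric inequality is positive
semidefinite. -/
theorem Matrix.posSemidef_of_ultrametric {ι : Type*} [Fintype ι] (X : Matrix ι ι ℝ)
    (h0 : ∀ i j, 0 ≤ X i j) (hs : ∀ i j, X i j = X j i)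
    (hu : ∀ i j k, min (X i j) (X j k) ≤ X i k) : X.PosSemidef := by
  classical
  induction hN : (Finset.univ.filter fun q : ι × ι => X q.1 q.2 ≠ 0).card
    using Nat.strong_induction_on generalizing X with
  | _ N ih =>
    by_cases hne : (Finset.univ.filter fun q : ι × ι => X q.1 q.2 ≠ 0).Nonempty
    · obtain ⟨⟨a, b⟩, hab, hmin⟩ := Finset.exists_min_image _ (fun q => X q.1 q.2) hne
      simp only [Finset.mem_filter, Finset.mem_univ, true_and] at hab hmin
      have hv : 0 < X a b := lt_of_le_of_ne (h0 a b) (Ne.symm hab)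
      set v := X a b with hvdef
      let Y : Matrix ι ι ℝ := Matrix.of fun i j => max (X i j - v) 0
      let E : Matrix ι ι ℝ := Matrix.of fun i j => if 0 < X i j then (1 : ℝ) else 0
      -- By minimality of `v`, truncated subtraction of `v` only alters the nonzero entries.
      have hX : X = Y + v • E := by
        ext i j
        simp only [Y, E, Matrix.add_apply, Matrix.smul_apply, Matrix.of_apply, smul_eq_mul]
        by_cases h : 0 < X i j
        · have := hmin (i, j) h.ne'
          simp only at this
          rw [if_pos h, max_eq_left (by linarith)]
          ring
        · have h' : X i j = 0 := le_antisymm (not_lt.mp h) (h0 i j)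
          rw [if_neg h, h', max_eq_right (by linarith)]
          ring
      have hE : E.PosSemidef := by
        refine Matrix.posSemidef_indicator (fun i j => 0 < X i j) ?_ ?_
        · intro i j h
          rwa [hs j i]
        · intro i j k h1 h2
          exact lt_of_lt_of_le (lt_min h1 h2) (hu i j k)
      have hY : Y.PosSemidef := by
        refine ih _ ?_ Y (fun i j => le_max_right _ _) ?_ ?_ rfl
        · rw [← hN]
          apply Finset.card_lt_card
          rw [Finset.ssubset_iff_of_subset]
          · exact ⟨(a, b), by simpa using hab, by simp [Y, ← hvdef]⟩
          · intro q hq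
            simp only [Finset.mem_filter, Finset.mem_univ, true_and] at hq ⊢
            intro h
            apply hq
            simp only [Y, Matrix.of_apply, h]
            exact max_eq_right (by linarith)
        · intro i j
          simp only [Y, Matrix.of_apply, hs i j]
        · intro i j k
          have hm : Monotone fun x : ℝ => max (x - v) 0 := fun x y h =>
            max_le_max (sub_le_sub_right h v) le_rfl
          exact hm.map_min.symm.trans_le (hm (hu i j k))
      rw [hX]
      exact hY.add (hE.smul hv.le)
    · have hX : X = 0 := by
        ext i j
        by_contra h
        exact hne ⟨(i, j), by simpa using h⟩
      rw [hX]
      exact Matrix.PosSemidef.zero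

theorem List.le_foldr_min_iff (l : List ℝ) (t b : ℝ) :
    t ≤ l.foldr min b ↔ t ≤ b ∧ ∀ x ∈ l, t ≤ x := by
  induction l with
  | nil => simp
  | cons a l ih =>
    simp only [List.foldr_cons, le_min_iff, ih, List.forall_mem_cons]
    tauto

/-- **Positivity of the BKAR interpolated matrix.** Let `G` be a forest (an acyclic simple
graph) on `{1, …, n}` with edge weights `w e ∈ [0,1]`, and let `X` be the `n × n` matrix
with `X i i = 1`, `X i j` (for `i ≠ j` in the same component) equal to the minimum of the
weights along the unique path of the forest joining `i` to `j` (expressed as the fold of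
`min` with neutral element `1` over the list of edge weights of any path from `i` to `j`),
and `X i j = 0` when `i` and `j` lie in different components. Then `X` is positive
semidefinite. -/
theorem bkar_matrix_posSemidef (n : ℕ) (hn : 1 ≤ n)
    (G : SimpleGraph (Fin n)) (hG : G.IsAcyclic)
    (w : Sym2 (Fin n) → ℝ) (hw : ∀ e ∈ G.edgeSet, w e ∈ Set.Icc (0 : ℝ) 1)
    (X : Matrix (Fin n) (Fin n) ℝ)
    (hdiag : ∀ i, X i i = 1)
    (hpath : ∀ i j, i ≠ j → ∀ p : G.Path i j,
      X i j = ((p : G.Walk i j).edges.map w).foldr min 1)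
    (hdisc : ∀ i j, i ≠ j → ¬ G.Reachable i j → X i j = 0) :
    X.PosSemidef := by
  -- An entry is bounded below by the weights along any walk, since a path extracted from the
  -- walk only uses edges of the walk.
  have lower : ∀ i j (p : G.Walk i j) (t : ℝ), t ≤ 1 → (∀ e ∈ p.edges, t ≤ w e) → t ≤ X i j := by
    intro i j p t ht h
    by_cases hij : i = j
    · subst hij
      rwa [hdiag]
    · rw [hpath i j hij p.toPath, List.le_foldr_min_iff]
      refine ⟨ht, fun x hx => ?_⟩
      obtain ⟨e, he, rfl⟩ := List.mem_map.mp hx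
      exact h e (p.edges_toPath_subset_edges he)
  have upper : ∀ i j, G.Reachable i j → X i j ≤ 1 ∧
      ∃ p : G.Walk i j, ∀ e ∈ p.edges, X i j ≤ w e := by
    intro i j hr
    by_cases hij : i = j
    · subst hij
      exact ⟨(hdiag i).le, SimpleGraph.Walk.nil, by simp⟩
    · obtain ⟨p⟩ := hr
      have h := (List.le_foldr_min_iff _ _ _).mp (hpath i j hij p.toPath).le
      exact ⟨h.1, p.toPath, fun e he => h.2 _ (List.mem_map_of_mem he)⟩
  have zero : ∀ i j, ¬ G.Reachable i j → X i j = 0 := fun i j h =>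
    hdisc i j (by rintro rfl; exact h (SimpleGraph.Reachable.refl _)) h
  have nonneg : ∀ i j, 0 ≤ X i j := by
    intro i j
    by_cases hr : G.Reachable i j
    · obtain ⟨p⟩ := hr
      exact lower i j p 0 zero_le_one fun e he => (hw e (p.edges_subset_edgeSet he)).1
    · exact (zero i j hr).ge
  have symm : ∀ i j, X i j ≤ X j i := by
    intro i j
    by_cases hr : G.Reachable i j
    · obtain ⟨h1, p, hp⟩ := upper i j hr
      exact lower j i p.reverse _ h1 (by simpa using hp)
    · rw [zero i j hr]
      exact nonneg j i
  refine Matrix.posSemidef_of_ultrametric X nonneg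
    (fun i j => le_antisymm (symm i j) (symm j i)) fun i j k => ?_
  by_cases hij : G.Reachable i j
  · by_cases hjk : G.Reachable j k
    · obtain ⟨h1, p, hp⟩ := upper i j hij
      obtain ⟨-, q, hq⟩ := upper j k hjk
      refine lower i k (p.append q) _ ((min_le_left _ _).trans h1) fun e he => ?_
      rw [SimpleGraph.Walk.edges_append, List.mem_append] at he
      exact he.elim (fun h => (min_le_left _ _).trans (hp e h))
        fun h => (min_le_right _ _).trans (hq e h)
    · exact (min_le_right _ _).trans ((zero j k hjk).le.trans (nonneg i k))
  · exact (min_le_left _ _).trans ((zero i j hij).le.trans (nonneg i k))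
end

section
/- Let n ≥ 1 and let P_n denote the set of unordered pairs {i,j}, 1 ≤ i < j ≤ n. Let f : ℝ^{P_n} → ℝ be a smooth (C^∞) function. Then f(1,…,1) = ∑_F ( ∏_{ℓ∈F} ∫_0^1 dw_ℓ ) ( ∏_{ℓ∈F} ∂_ℓ f ) ( x^F(w) ), where the sum ranges over all forests F on {1,…,n} (including the empty forest, whose contribution is f(0,…,0)), ∂_ℓ denotes the partial derivative with respect to the coordinate indexed by the pair ℓ, and x^F(w) ∈ ℝ^{P_n} is the point whose coordinate at the pair ℓ = {i,j} equals the minimum of w_{ℓ'} over the edges ℓ' of the unique path in F joining i to j if i and j are connected in F, and equals 0 otherwise. -/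
/-!
The proof compares, for each forest `F`, two integrals over the cube `[0,1]^F` of
`∂_F f = ∏_{ℓ ∈ F} ∂_ℓ f`. Write `x^F(w, s)` for the point which agrees with `x^F(w)` at the pairs
linked by `F` and equals `s` at all the others (`interpPoint`), and `m(w)` for the least weight of
an edge of `F`, with `m = 1` for the empty forest (`minWeight`). Put

* `L_F = ∫ ∂_F f (x^F(w, 0)) dw`, the term of `F` in the formula;
* `U_F = ∫ ∂_F f (x^F(w, m(w))) dw`, so that `U_∅ = f(1,…,1)`.

Only the unlinked coordinates of `x^F(w, s)` depend on `s`, so the fundamental theorem of calculus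
gives `U_F - L_F = ∑_ℓ ∫ dw ∫_0^{m(w)} ds ∂_ℓ ∂_F f (x^F(w, s))`, summed over the pairs `ℓ` not
linked by `F`. For these `ℓ`, `F ∪ {ℓ}` is again a forest, and if `ℓ` is given the weight `s ≤ m(w)`
then `x^F(w, s) = x^{F ∪ {ℓ}}((w, s), s)` (`interpPoint_insert`): the pairs newly linked through `ℓ`
have path minimum `s`. Thus the term of `ℓ` is the integral defining `U_{F ∪ {ℓ}}`, restricted to
the region where `ℓ` is the edge of least weight (`integral_sub_eq_sum_minEdgeIntegral`).

Pairs `(F, ℓ)` as above correspond to a forest `G` with a marked edge `ℓ` (`sum_forest_insert`), and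
for `G ≠ ∅` the regions of least edge partition the cube up to the null set of ties
(`sum_minEdgeIntegral`). Summing over `F` yields `∑_F U_F - ∑_F L_F = ∑_{G ≠ ∅} U_G`, that is
`f(1,…,1) = U_∅ = ∑_F L_F`.

All integrals are taken over the single cube `[0,1]^{P_n}` with its uniform probability measure, the
unused weights being dummy variables; Fubini then amounts to the invariance of this measure under
resampling one coordinate (`measurePreserving_update`).
-/

open MeasureTheory

/-- The set `P_n` of unordered pairs `{i,j}` with `i < j`, encoded as ordered pairs. -/
abbrev PairIdx (n : ℕ) := {p : Fin n × Fin n // p.1 < p.2}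

/-- A finite set `F` of pairs is a forest on `{1, …, n}` if the simple graph whose edges
are the pairs of `F` contains no cycle. -/
def IsForestOn {n : ℕ} (F : Finset (PairIdx n)) : Prop :=
  (SimpleGraph.fromEdgeSet
    {e : Sym2 (Fin n) | ∃ p ∈ F, e = s(p.val.1, p.val.2)}).IsAcyclic

/-- The BKAR interpolation point `x^F(w) ∈ ℝ^{P_n}`: its coordinate at the pair
`ℓ = {i,j}` is the minimum of `w` over the unique path in the forest `F` joining `i` to
`j` when `i` and `j` are connected in `F`, and `0` otherwise.  This is expressed as the
supremum of the set of thresholds `r` such that `i` and `j` are joined by a chain of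
edges of `F` all of whose weights are `≥ r` (for a forest with weights in `[0,1]` this
supremum is exactly the minimum along the unique path, and it is `0 = sSup ∅` when `i`
and `j` are disconnected). -/
noncomputable def bkarPoint {n : ℕ} (F : Finset (PairIdx n)) (w : F → ℝ) :
    PairIdx n → ℝ := fun ℓ =>
  sSup {r : ℝ | Relation.ReflTransGen
    (fun u v => ∃ p : F, r ≤ w p ∧
      ((p.val.val.1 = u ∧ p.val.val.2 = v) ∨ (p.val.val.1 = v ∧ p.val.val.2 = u)))
    ℓ.val.1 ℓ.val.2}

/-- The partial derivative `∂_ℓ` acting on functions of the variables `(x_ℓ)_{ℓ ∈ P_n}`. -/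
noncomputable def partialDeriv {n : ℕ} (ℓ : PairIdx n)
    (g : (PairIdx n → ℝ) → ℝ) : (PairIdx n → ℝ) → ℝ :=
  fun x => fderiv ℝ g x (Pi.single ℓ 1)


/-! ### Chains of edges and forests -/

/-- The endpoints of the pair `ℓ` are joined by a chain of pairs belonging to `A`. -/
def Linked {n : ℕ} (A : Set (PairIdx n)) (ℓ : PairIdx n) : Prop :=
  Relation.ReflTransGen
    (fun u v => ∃ p ∈ A, (p.val.1 = u ∧ p.val.2 = v) ∨ (p.val.1 = v ∧ p.val.2 = u))
    ℓ.val.1 ℓ.val.2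

lemma Linked.mono {n : ℕ} {A B : Set (PairIdx n)} (h : A ⊆ B) {ℓ : PairIdx n}
    (hA : Linked A ℓ) : Linked B ℓ :=
  Relation.ReflTransGen.mono (fun _ _ ⟨p, hp, hq⟩ => ⟨p, h hp, hq⟩) _ _ hA

lemma linked_of_mem {n : ℕ} {A : Set (PairIdx n)} {ℓ : PairIdx n} (h : ℓ ∈ A) : Linked A ℓ :=
  Relation.ReflTransGen.single ⟨ℓ, h, Or.inl ⟨rfl, rfl⟩⟩

/-- A pair has distinct endpoints, so a chain joining them uses at least one pair. -/
lemma Linked.nonempty {n : ℕ} {A : Set (PairIdx n)} {ℓ : PairIdx n} (h : Linked A ℓ) :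
    A.Nonempty := by
  rcases Relation.ReflTransGen.cases_head h with h | ⟨_, ⟨p, hp, _⟩, _⟩
  · exact absurd h ℓ.2.ne
  · exact ⟨p, hp⟩

lemma linked_iff_reachable {n : ℕ} (F : Finset (PairIdx n)) (ℓ : PairIdx n) :
    Linked (F : Set (PairIdx n)) ℓ ↔ (SimpleGraph.fromEdgeSet
      {e : Sym2 (Fin n) | ∃ p ∈ F, e = s(p.val.1, p.val.2)}).Reachable ℓ.val.1 ℓ.val.2 := by
  rw [SimpleGraph.reachable_iff_reflTransGen]
  constructor
  · refine Relation.ReflTransGen.mono ?_ _ _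
    rintro u v ⟨p, hp, ⟨rfl, rfl⟩ | ⟨rfl, rfl⟩⟩
    · exact (SimpleGraph.fromEdgeSet_adj _).2 ⟨⟨p, hp, rfl⟩, p.2.ne⟩
    · exact (SimpleGraph.fromEdgeSet_adj _).2 ⟨⟨p, hp, Sym2.eq_swap⟩, p.2.ne'⟩
  · refine Relation.ReflTransGen.mono ?_ _ _
    intro u v h
    obtain ⟨⟨p, hp, h⟩, -⟩ := (SimpleGraph.fromEdgeSet_adj _).1 h
    refine ⟨p, hp, ?_⟩
    rcases Sym2.eq_iff.1 h with ⟨h₁, h₂⟩ | ⟨h₁, h₂⟩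
    · exact Or.inl ⟨h₁.symm, h₂.symm⟩
    · exact Or.inr ⟨h₂.symm, h₁.symm⟩

lemma isForestOn_empty {n : ℕ} : IsForestOn (∅ : Finset (PairIdx n)) := by
  simp [IsForestOn]

lemma isForestOn_insert {n : ℕ} {F : Finset (PairIdx n)} {ℓ : PairIdx n} (h : ℓ ∉ F) :
    IsForestOn (insert ℓ F) ↔ IsForestOn F ∧ ¬ Linked (F : Set (PairIdx n)) ℓ := by
  have hG : SimpleGraph.fromEdgeSet
        {e : Sym2 (Fin n) | ∃ p ∈ insert ℓ F, e = s(p.val.1, p.val.2)} =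
      SimpleGraph.fromEdgeSet {e : Sym2 (Fin n) | ∃ p ∈ F, e = s(p.val.1, p.val.2)} ⊔
        SimpleGraph.edge ℓ.val.1 ℓ.val.2 := by
    rw [SimpleGraph.edge, ← SimpleGraph.fromEdgeSet_union]
    congr 1
    ext e
    simp
  rw [IsForestOn, hG, SimpleGraph.isAcyclic_sup_fromEdgeSet_iff, linked_iff_reachable]
  refine and_congr Iff.rfl ⟨fun h' hr => ?_, fun h' hr => absurd hr h'⟩
  rcases h' hr with h' | h'
  · exact ℓ.2.ne h'
  · obtain ⟨⟨p, hp, he⟩, -⟩ := (SimpleGraph.fromEdgeSet_adj _).1 h'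
    have : ℓ = p := by
      rcases Sym2.eq_iff.1 he with ⟨h₁, h₂⟩ | ⟨h₁, h₂⟩
      · exact Subtype.ext (Prod.ext h₁ h₂)
      · exact absurd (h₁ ▸ h₂ ▸ ℓ.2) p.2.asymm
    exact h (this ▸ hp)

open Classical in
/-- Choosing a forest `F` and a pair not linked by `F` amounts to choosing a forest `G` and one
of its edges, through `G = F ∪ {ℓ}`. -/
lemma sum_forest_insert {n : ℕ} (a : Finset (PairIdx n) → PairIdx n → ℝ) :
    ∑ F ∈ Finset.univ.filter (fun F : Finset (PairIdx n) => IsForestOn F),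
      ∑ ℓ ∈ Finset.univ.filter (fun ℓ => ¬ Linked (F : Set (PairIdx n)) ℓ), a (insert ℓ F) ℓ =
    ∑ G ∈ Finset.univ.filter (fun G : Finset (PairIdx n) => IsForestOn G), ∑ ℓ ∈ G, a G ℓ := by
  rw [Finset.sum_sigma', Finset.sum_sigma']
  have key : ∀ (F : Finset (PairIdx n)) ℓ, ¬ Linked (F : Set (PairIdx n)) ℓ → ℓ ∉ F :=
    fun F ℓ h h' => h (linked_of_mem (by exact_mod_cast h'))
  refine Finset.sum_bij' (fun x _ => ⟨insert x.2 x.1, x.2⟩) (fun x _ => ⟨x.1.erase x.2, x.2⟩)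
    ?_ ?_ ?_ ?_ ?_
  · rintro ⟨F, ℓ⟩ h
    simp only [Finset.mem_sigma, Finset.mem_filter, Finset.mem_univ, true_and] at h ⊢
    exact ⟨(isForestOn_insert (key F ℓ h.2)).2 h, Finset.mem_insert_self _ _⟩
  · rintro ⟨G, ℓ⟩ h
    simp only [Finset.mem_sigma, Finset.mem_filter, Finset.mem_univ, true_and] at h ⊢
    exact (isForestOn_insert (Finset.notMem_erase ℓ G)).1
      (by rw [Finset.insert_erase h.2]; exact h.1)
  · rintro ⟨F, ℓ⟩ h
    simp only [Finset.mem_sigma, Finset.mem_filter, Finset.mem_univ, true_and] at h ⊢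
    rw [Finset.erase_insert (key F ℓ h.2)]
  · rintro ⟨G, ℓ⟩ h
    simp only [Finset.mem_sigma, Finset.mem_filter, Finset.mem_univ, true_and] at h ⊢
    rw [Finset.insert_erase h.2]
  · rintro ⟨F, ℓ⟩ h
    rfl

/-! ### Iterated partial derivatives -/

lemma contDiff_partialDeriv {n : ℕ} (ℓ : PairIdx n) {f : (PairIdx n → ℝ) → ℝ}
    (hf : ContDiff ℝ (⊤ : ℕ∞) f) : ContDiff ℝ (⊤ : ℕ∞) (partialDeriv ℓ f) :=
  (hf.fderiv_right (m := (⊤ : ℕ∞)) (by simp)).clm_apply contDiff_const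

lemma contDiff_foldr_partialDeriv {n : ℕ} {f : (PairIdx n → ℝ) → ℝ}
    (hf : ContDiff ℝ (⊤ : ℕ∞) f) (l : List (PairIdx n)) :
    ContDiff ℝ (⊤ : ℕ∞) (l.foldr partialDeriv f) := by
  induction l with
  | nil => exact hf
  | cons a l ih => exact contDiff_partialDeriv a ih

lemma partialDeriv_comm {n : ℕ} (a b : PairIdx n) {f : (PairIdx n → ℝ) → ℝ}
    (hf : ContDiff ℝ (⊤ : ℕ∞) f) :
    partialDeriv a (partialDeriv b f) = partialDeriv b (partialDeriv a f) := by
  have h1 : Differentiable ℝ (fderiv ℝ f) :=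
    (hf.fderiv_right (m := (⊤ : ℕ∞)) (by simp)).differentiable (by simp)
  have h2 : ∀ (c d : PairIdx n) x, partialDeriv c (partialDeriv d f) x =
      fderiv ℝ (fderiv ℝ f) x (Pi.single c 1) (Pi.single d 1) := by
    intro c d x
    unfold partialDeriv
    rw [fderiv_clm_apply (h1 x) (differentiableAt_const _)]
    simp
  funext x
  rw [h2, h2]
  exact hf.contDiffAt.isSymmSndFDerivAt 
    (by simpa using WithTop.coe_le_coe.2 (le_top : (2 : ℕ∞) ≤ ⊤)) _ _

lemma foldr_partialDeriv_perm {n : ℕ} {f : (PairIdx n → ℝ) → ℝ}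
    (hf : ContDiff ℝ (⊤ : ℕ∞) f) {l₁ l₂ : List (PairIdx n)} (h : l₁.Perm l₂) :
    l₁.foldr partialDeriv f = l₂.foldr partialDeriv f := by
  induction h with
  | nil => rfl
  | cons a _ ih => simp only [List.foldr_cons, ih]
  | swap a b l => exact partialDeriv_comm _ _ (contDiff_foldr_partialDeriv hf l)
  | trans _ _ ih₁ ih₂ => exact ih₁.trans ih₂

lemma partialDeriv_foldr_toList {n : ℕ} {f : (PairIdx n → ℝ) → ℝ}
    (hf : ContDiff ℝ (⊤ : ℕ∞) f) {F : Finset (PairIdx n)} {ℓ : PairIdx n} (h : ℓ ∉ F) :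
    partialDeriv ℓ (F.toList.foldr partialDeriv f) =
      (insert ℓ F).toList.foldr partialDeriv f :=
  (foldr_partialDeriv_perm hf (Finset.toList_insert h)).symm

/-! ### The interpolation point -/

/-- The thresholds `r` such that the endpoints of `ℓ` are joined by a chain of pairs of `F` of
weight at least `r`. -/
def thresholds {n : ℕ} (F : Finset (PairIdx n)) (w : PairIdx n → ℝ) (ℓ : PairIdx n) : Set ℝ :=
  {r | Linked {p | p ∈ F ∧ r ≤ w p} ℓ}

open Classical in
/-- The point whose coordinates at the pairs linked by `F` are those of `x^F(w)`, and whose other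
coordinates are all equal to `s`. The weights `w` are indexed by all pairs, but only those of the
edges of `F` matter. -/
noncomputable def interpPoint {n : ℕ} (F : Finset (PairIdx n)) (w : PairIdx n → ℝ) (s : ℝ) :
    PairIdx n → ℝ :=
  fun ℓ => if Linked (F : Set (PairIdx n)) ℓ then sSup (thresholds F w ℓ) else s

lemma bkarPoint_restrict {n : ℕ} (F : Finset (PairIdx n)) (w : PairIdx n → ℝ) (ℓ : PairIdx n) :
    bkarPoint F (fun p : F => w p) ℓ = sSup (thresholds F w ℓ) := by
  have : ∀ (r : ℝ) (u v : Fin n),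
      (∃ p : F, r ≤ w p ∧
        ((p.val.val.1 = u ∧ p.val.val.2 = v) ∨ (p.val.val.1 = v ∧ p.val.val.2 = u))) ↔
      ∃ p ∈ {p | p ∈ F ∧ r ≤ w p},
        (p.val.1 = u ∧ p.val.2 = v) ∨ (p.val.1 = v ∧ p.val.2 = u) := by
    intro r u v
    constructor
    · rintro ⟨p, h1, h2⟩
      exact ⟨p, ⟨p.2, h1⟩, h2⟩
    · rintro ⟨p, ⟨h0, h1⟩, h2⟩
      exact ⟨⟨p, h0⟩, h1, h2⟩
  simp only [bkarPoint, thresholds, Linked, this]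

lemma mem_thresholds {n : ℕ} {F : Finset (PairIdx n)} {w : PairIdx n → ℝ}
    {ℓ : PairIdx n} {r : ℝ} :
    r ∈ thresholds F w ℓ ↔ Linked {p | p ∈ F ∧ r ≤ w p} ℓ :=
  Iff.rfl

lemma linked_of_mem_thresholds {n : ℕ} {F : Finset (PairIdx n)} {w : PairIdx n → ℝ}
    {ℓ : PairIdx n} {r : ℝ} (h : r ∈ thresholds F w ℓ) : Linked (F : Set (PairIdx n)) ℓ :=
  Linked.mono (fun _ hp => hp.1) h

lemma mem_thresholds_of_le {n : ℕ} {F : Finset (PairIdx n)} {w : PairIdx n → ℝ}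
    {ℓ : PairIdx n} {r : ℝ} (hF : Linked (F : Set (PairIdx n)) ℓ) (hr : ∀ p ∈ F, r ≤ w p) :
    r ∈ thresholds F w ℓ :=
  mem_thresholds.2 (hF.mono (B := {p | p ∈ F ∧ r ≤ w p}) fun p hp => ⟨hp, hr p hp⟩)

lemma thresholds_eq_empty {n : ℕ} {F : Finset (PairIdx n)} {w : PairIdx n → ℝ}
    {ℓ : PairIdx n} (hF : ¬ Linked (F : Set (PairIdx n)) ℓ) : thresholds F w ℓ = ∅ :=
  Set.eq_empty_of_forall_notMem fun _ h => hF (linked_of_mem_thresholds h)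

lemma bddAbove_thresholds {n : ℕ} (F : Finset (PairIdx n)) (w : PairIdx n → ℝ)
    (ℓ : PairIdx n) : BddAbove (thresholds F w ℓ) := by
  refine ⟨‖w‖, fun r hr => ?_⟩
  obtain ⟨p, -, hp⟩ := Linked.nonempty hr
  exact hp.trans ((le_abs_self _).trans (norm_le_pi_norm w p))

lemma interpPoint_zero {n : ℕ} (F : Finset (PairIdx n)) (w : PairIdx n → ℝ) :
    interpPoint F w 0 = bkarPoint F (fun p : F => w p) := by
  funext ℓ
  rw [bkarPoint_restrict, interpPoint]
  split_ifs with h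
  · rfl
  · rw [thresholds_eq_empty h, Real.sSup_empty]

lemma interpPoint_empty {n : ℕ} (w : PairIdx n → ℝ) (s : ℝ) :
    interpPoint ∅ w s = fun _ => s := by
  funext ℓ
  refine if_neg fun h => ?_
  simpa using h.nonempty

/-- Adding to `F` an edge `ℓ` whose weight `s` is below all the weights of `F` does not move the
interpolation point: the pairs which become linked get the value `s`, which they already had. -/
lemma interpPoint_insert {n : ℕ} {F : Finset (PairIdx n)} {ℓ : PairIdx n}
    (hℓ : ¬ Linked (F : Set (PairIdx n)) ℓ) {w : PairIdx n → ℝ} {s : ℝ}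
    (hs : ∀ p ∈ F, s ≤ w p) :
    interpPoint (insert ℓ F) (Function.update w ℓ s) s = interpPoint F w s := by
  have hℓF : ℓ ∉ F := fun h => hℓ (linked_of_mem (by exact_mod_cast h))
  have hne : ∀ p ∈ F, p ≠ ℓ := fun p hp h => hℓF (h ▸ hp)
  -- Below `s` every edge of `F ∪ {ℓ}` is available; above `s` only edges of `F` are.
  have hlow : ∀ k r, r ≤ s → Linked ((insert ℓ F : Finset (PairIdx n)) : Set (PairIdx n)) k →
      r ∈ thresholds (insert ℓ F) (Function.update w ℓ s) k := by
    intro k r hr hk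
    refine mem_thresholds_of_le hk fun p hp => ?_
    rcases Finset.mem_insert.1 hp with rfl | hp
    · simpa using hr
    · rw [Function.update_of_ne (hne p hp)]
      exact hr.trans (hs p hp)
  have hhigh : ∀ k r, s < r → (r ∈ thresholds (insert ℓ F) (Function.update w ℓ s) k ↔
      r ∈ thresholds F w k) := by
    intro k r hr
    have : {p | p ∈ insert ℓ F ∧ r ≤ Function.update w ℓ s p} = {p | p ∈ F ∧ r ≤ w p} := by
      ext p
      by_cases hp : p = ℓ
      · subst hp
        simp [hℓF, hr]
      · simp [hp]
    simp only [mem_thresholds, this]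
  funext k
  unfold interpPoint
  by_cases hF : Linked (F : Set (PairIdx n)) k
  · have hG : Linked ((insert ℓ F : Finset (PairIdx n)) : Set (PairIdx n)) k :=
      hF.mono (by simp)
    rw [if_pos hF, if_pos hG]
    congr 1
    ext r
    rcases le_or_gt r s with hr | hr
    · exact iff_of_true (hlow k r hr hG) (mem_thresholds_of_le hF fun p hp => hr.trans (hs p hp))
    · exact hhigh k r hr
  · rw [if_neg hF]
    split_ifs with hG
    · have : thresholds (insert ℓ F) (Function.update w ℓ s) k = Set.Iic s := by
        ext r
        rcases le_or_gt r s with hr | hr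
        · exact iff_of_true (hlow k r hr hG) hr
        · rw [hhigh k r hr, thresholds_eq_empty hF]
          simpa using hr
      rw [this, csSup_Iic]
    · rfl

lemma continuous_sSup_thresholds {n : ℕ} {F : Finset (PairIdx n)} {ℓ : PairIdx n}
    (hF : Linked (F : Set (PairIdx n)) ℓ) :
    Continuous fun w : PairIdx n → ℝ => sSup (thresholds F w ℓ) := by
  refine (LipschitzWith.of_le_add fun w w' => ?_).continuous
  refine csSup_le ⟨-‖w‖, mem_thresholds_of_le hF fun p _ => ?_⟩ fun r hr => ?_
  · exact (abs_le.1 (norm_le_pi_norm w p)).1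
  · rw [← sub_le_iff_le_add]
    refine le_csSup (bddAbove_thresholds F w' ℓ)
      (mem_thresholds.2 ((mem_thresholds.1 hr).mono
        (B := {p | p ∈ F ∧ r - dist w w' ≤ w' p}) fun p hp => ⟨hp.1, ?_⟩))
    have h1 := (abs_le.1 (dist_le_pi_dist w w' p)).2
    have h2 := hp.2
    linarith

lemma continuous_interpPoint {n : ℕ} (F : Finset (PairIdx n)) :
    Continuous fun x : (PairIdx n → ℝ) × ℝ => interpPoint F x.1 x.2 := by
  refine continuous_pi fun ℓ => ?_
  by_cases h : Linked (F : Set (PairIdx n)) ℓ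
  · simp only [interpPoint, if_pos h]
    exact (continuous_sSup_thresholds h).comp continuous_fst
  · simp only [interpPoint, if_neg h]
    exact continuous_snd

lemma continuous_bkarPoint {n : ℕ} (F : Finset (PairIdx n)) : Continuous (bkarPoint F) := by
  classical
  have hext : Continuous fun (v : F → ℝ) (p : PairIdx n) => if h : p ∈ F then v ⟨p, h⟩ else 0 := by
    refine continuous_pi fun p => ?_
    by_cases h : p ∈ F
    · simpa only [dif_pos h] using continuous_apply (⟨p, h⟩ : F)
    · simpa only [dif_neg h] using continuous_const
  convert (continuous_interpPoint F).comp (hext.prodMk (continuous_const (y := (0 : ℝ)))) using 1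
  funext v
  simp [interpPoint_zero]

open Classical in
lemma hasDerivAt_comp_interpPoint {n : ℕ} (F : Finset (PairIdx n)) (w : PairIdx n → ℝ)
    {g : (PairIdx n → ℝ) → ℝ} (hg : ContDiff ℝ (⊤ : ℕ∞) g) (s : ℝ) :
    HasDerivAt (fun s => g (interpPoint F w s))
      (∑ ℓ ∈ Finset.univ.filter (fun ℓ => ¬ Linked (F : Set (PairIdx n)) ℓ),
        partialDeriv ℓ g (interpPoint F w s)) s := by
  have h1 : HasDerivAt (fun s => interpPoint F w s)
      (∑ ℓ ∈ Finset.univ.filter (fun ℓ => ¬ Linked (F : Set (PairIdx n)) ℓ),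
        (Pi.single ℓ 1 : PairIdx n → ℝ)) s := by
    refine hasDerivAt_pi.2 fun ℓ => ?_
    rw [Finset.sum_apply]
    by_cases h : Linked (F : Set (PairIdx n)) ℓ
    · simp only [interpPoint, if_pos h]
      refine (hasDerivAt_const s _).congr_deriv (Eq.symm ?_)
      refine Finset.sum_eq_zero fun k hk => Pi.single_eq_of_ne ?_ _
      rintro rfl
      exact (Finset.mem_filter.1 hk).2 h
    · simp only [interpPoint, if_neg h]
      refine (hasDerivAt_id' s).congr_deriv (Eq.symm ?_)
      rw [Finset.sum_eq_single ℓ]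
      · simp
      · intro k _ hk
        exact Pi.single_eq_of_ne hk.symm _
      · intro h'
        exact (h' (Finset.mem_filter.2 ⟨Finset.mem_univ _, h⟩)).elim
  have h2 := ((hg.differentiable (by simp)) (interpPoint F w s)).hasFDerivAt.comp_hasDerivAt s h1
  rw [map_sum] at h2
  exact h2

/-! ### The minimal weight of a forest -/

/-- The least weight of an edge of `F`, capped by `1`; it is `1` when `F` is empty. -/
noncomputable def minWeight {n : ℕ} (F : Finset (PairIdx n)) (w : PairIdx n → ℝ) : ℝ :=
  F.fold min 1 w

lemma le_minWeight {n : ℕ} {F : Finset (PairIdx n)} {w : PairIdx n → ℝ} {c : ℝ} :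
    c ≤ minWeight F w ↔ c ≤ 1 ∧ ∀ p ∈ F, c ≤ w p :=
  Finset.le_fold_min c

lemma continuous_minWeight {n : ℕ} (F : Finset (PairIdx n)) :
    Continuous fun w : PairIdx n → ℝ => minWeight F w := by
  classical
  induction F using Finset.induction_on with
  | empty => simpa [minWeight] using continuous_const
  | insert a F ha ih =>
    simp only [minWeight, Finset.fold_insert ha]
    exact (continuous_apply a).min ih

lemma minWeight_eq {n : ℕ} {F : Finset (PairIdx n)} {w : PairIdx n → ℝ} {ℓ : PairIdx n}
    (hℓ : ℓ ∈ F) (h1 : w ℓ ≤ 1) (hmin : ∀ p ∈ F, w ℓ ≤ w p) : minWeight F w = w ℓ :=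
  le_antisymm ((le_minWeight.1 le_rfl).2 ℓ hℓ) (le_minWeight.2 ⟨h1, hmin⟩)

/-! ### Integration over the cube -/

/-- The uniform probability measure on `[0,1]^{P_n}`. Integrals over `[0,1]^F` are computed
against it, the weights of the pairs outside `F` being dummy variables. -/
noncomputable def cubeMeasure (n : ℕ) : Measure (PairIdx n → ℝ) :=
  Measure.pi fun _ => volume.restrict (Set.Icc (0 : ℝ) 1)

lemma cubeMeasure_eq (n : ℕ) : cubeMeasure n =
    volume.restrict (Set.univ.pi fun _ : PairIdx n => Set.Icc (0 : ℝ) 1) := by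
  rw [cubeMeasure, volume_pi, Measure.restrict_pi_pi]

instance isProbabilityMeasure_restrict_Icc :
    IsProbabilityMeasure ((volume : Measure ℝ).restrict (Set.Icc (0 : ℝ) 1)) :=
  ⟨by simp⟩

instance isProbabilityMeasure_cubeMeasure (n : ℕ) : IsProbabilityMeasure (cubeMeasure n) := by
  unfold cubeMeasure
  infer_instance

lemma integrable_cubeMeasure {n : ℕ} {h : (PairIdx n → ℝ) → ℝ} (hh : Continuous h) :
    Integrable h (cubeMeasure n) := by
  rw [cubeMeasure_eq]
  exact hh.continuousOn.integrableOn_compact (isCompact_univ_pi fun _ => isCompact_Icc)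

lemma ae_mem_cube (n : ℕ) : ∀ᵐ w ∂cubeMeasure n, ∀ p, w p ∈ Set.Icc (0 : ℝ) 1 := by
  rw [cubeMeasure_eq]
  filter_upwards [ae_restrict_mem (MeasurableSet.univ_pi fun _ => measurableSet_Icc)] with w hw p
  exact hw p (Set.mem_univ p)

lemma ae_injective (n : ℕ) : ∀ᵐ w ∂cubeMeasure n, Function.Injective w := by
  have key : ∀ p q : PairIdx n, p ≠ q → ∀ᵐ w ∂cubeMeasure n, w p ≠ w q := by
    intro p q hpq
    rw [cubeMeasure_eq]
    refine ae_restrict_of_ae ?_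
    let S : Submodule ℝ (PairIdx n → ℝ) :=
      LinearMap.ker (LinearMap.proj (R := ℝ) (φ := fun _ : PairIdx n => ℝ) p -
        LinearMap.proj (R := ℝ) (φ := fun _ : PairIdx n => ℝ) q)
    have hS : S ≠ ⊤ := by
      intro h
      have : (Pi.single p 1 : PairIdx n → ℝ) ∈ S := h ▸ Submodule.mem_top
      simp [S, Pi.single_eq_of_ne hpq.symm] at this
    have h0 := Measure.addHaar_submodule volume S hS
    refine measure_mono_null (fun w hw => ?_) h0
    simpa [S, sub_eq_zero] using hw
  have : ∀ᵐ w ∂cubeMeasure n, ∀ p q : PairIdx n, p ≠ q → w p ≠ w q := by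
    simp only [ae_all_iff]
    exact key
  filter_upwards [this] with w hw p q hpq
  by_contra h
  exact hw p q h hpq

/-- Resampling one coordinate preserves the uniform measure on the cube. -/
lemma measurePreserving_update {n : ℕ} (ℓ : PairIdx n) :
    MeasurePreserving (fun x : (PairIdx n → ℝ) × ℝ => Function.update x.1 ℓ x.2)
      ((cubeMeasure n).prod (volume.restrict (Set.Icc (0 : ℝ) 1))) (cubeMeasure n) := by
  have hm : Measurable fun x : (PairIdx n → ℝ) × ℝ => Function.update x.1 ℓ x.2 := by
    refine measurable_pi_lambda _ fun p => ?_
    by_cases hp : p = ℓ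
    · subst hp
      simpa using measurable_snd
    · simp only [Function.update_of_ne hp]
      exact (measurable_pi_apply p).comp measurable_fst
  refine ⟨hm, (Measure.pi_eq fun s hs => ?_).symm⟩
  have hpre : (fun x : (PairIdx n → ℝ) × ℝ => Function.update x.1 ℓ x.2) ⁻¹' Set.univ.pi s =
      (Set.univ.pi (Function.update s ℓ Set.univ)) ×ˢ s ℓ := by
    ext x
    simp only [Set.mem_preimage, Set.mem_pi, Set.mem_univ, true_imp_iff, Set.mem_prod]
    constructor
    · refine fun h => ⟨fun p => ?_, by simpa using h ℓ⟩
      by_cases hp : p = ℓ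
      · subst hp
        simp
      · simpa [Function.update_of_ne hp] using h p
    · rintro ⟨h1, h2⟩ p
      by_cases hp : p = ℓ
      · subst hp
        simpa using h2
      · simpa [Function.update_of_ne hp] using h1 p
  rw [Measure.map_apply hm (MeasurableSet.univ_pi hs), hpre, Measure.prod_prod, cubeMeasure,
    Measure.pi_pi, ← Finset.mul_prod_erase Finset.univ _ (Finset.mem_univ ℓ),
    ← Finset.mul_prod_erase Finset.univ (fun p => (volume.restrict (Set.Icc (0 : ℝ) 1)) (s p))
      (Finset.mem_univ ℓ), Function.update_self, measure_univ, one_mul, mul_comm]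
  congr 1
  refine Finset.prod_congr rfl fun p hp => ?_
  rw [Function.update_of_ne (Finset.ne_of_mem_erase hp)]

lemma measurePreserving_restrict_cube {n : ℕ} (F : Finset (PairIdx n)) :
    MeasurePreserving (fun (w : PairIdx n → ℝ) (p : F) => w p) (cubeMeasure n)
      (volume.restrict (Set.univ.pi fun _ : F => Set.Icc (0 : ℝ) 1)) := by
  classical
  have hm : Measurable fun (w : PairIdx n → ℝ) (p : F) => w p :=
    measurable_pi_lambda _ fun p => measurable_pi_apply _
  rw [volume_pi, Measure.restrict_pi_pi]
  refine ⟨hm, (Measure.pi_eq fun s hs => ?_).symm⟩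
  have hpre : (fun (w : PairIdx n → ℝ) (p : F) => w p) ⁻¹' Set.univ.pi s =
      Set.univ.pi fun p => if h : p ∈ F then s ⟨p, h⟩ else Set.univ := by
    ext w
    simp only [Set.mem_preimage, Set.mem_pi, Set.mem_univ, true_imp_iff]
    constructor
    · intro h p
      split_ifs with hp
      · exact h ⟨p, hp⟩
      · exact Set.mem_univ _
    · intro h p
      simpa using h p
  rw [Measure.map_apply hm (MeasurableSet.univ_pi hs), hpre, cubeMeasure, Measure.pi_pi,
    ← Finset.prod_subset (Finset.subset_univ F), ← Finset.prod_coe_sort]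
  · refine Finset.prod_congr rfl fun p _ => ?_
    simp
  · intro p _ hp
    rw [dif_neg hp, measure_univ]

/-! ### The contribution of a forest with a marked minimal edge -/

open Classical in
/-- The integral of `(∏_{p ∈ G} ∂_p f)(x^G(w))`, with the pairs not linked by `G` sitting at `w ℓ`,
over the part of the cube where `ℓ` has the least weight among the edges of `G`. -/
noncomputable def minEdgeIntegral {n : ℕ} (f : (PairIdx n → ℝ) → ℝ) (G : Finset (PairIdx n))
    (ℓ : PairIdx n) : ℝ :=
  ∫ v, {v : PairIdx n → ℝ | ∀ p ∈ G, v ℓ ≤ v p}.indicator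
    (fun v => (G.toList.foldr partialDeriv f) (interpPoint G v (v ℓ))) v ∂cubeMeasure n

lemma measurableSet_isMin {n : ℕ} (G : Finset (PairIdx n)) (ℓ : PairIdx n) :
    MeasurableSet {v : PairIdx n → ℝ | ∀ p ∈ G, v ℓ ≤ v p} := by
  have : {v : PairIdx n → ℝ | ∀ p ∈ G, v ℓ ≤ v p} =
      ⋂ p ∈ G, {v : PairIdx n → ℝ | v ℓ ≤ v p} := by
    ext v
    simp
  rw [this]
  exact Finset.measurableSet_biInter G fun p _ =>
    measurableSet_le (measurable_pi_apply ℓ) (measurable_pi_apply p)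

lemma integrable_minEdge {n : ℕ} {H : (PairIdx n → ℝ) → ℝ} (hH : Continuous H)
    (G : Finset (PairIdx n)) (ℓ : PairIdx n) :
    Integrable ({v : PairIdx n → ℝ | ∀ p ∈ G, v ℓ ≤ v p}.indicator
      (fun v => H (interpPoint G v (v ℓ)))) (cubeMeasure n) :=
  (integrable_cubeMeasure (hH.comp ((continuous_interpPoint G).comp
    (continuous_id.prodMk (continuous_apply ℓ))))).indicator (measurableSet_isMin G ℓ)

/-- Integrating out the weight `s` of the marked minimal edge `ℓ`: it runs from `0` to the minimal
weight of the remaining forest `F`, and the interpolation point only sees `F`. -/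
lemma minEdgeIntegral_insert {n : ℕ} {f : (PairIdx n → ℝ) → ℝ} (hf : ContDiff ℝ (⊤ : ℕ∞) f)
    {F : Finset (PairIdx n)} {ℓ : PairIdx n} (hℓ : ¬ Linked (F : Set (PairIdx n)) ℓ) :
    minEdgeIntegral f (insert ℓ F) ℓ =
      ∫ w, (∫ s in (0 : ℝ)..minWeight F w,
        ((insert ℓ F).toList.foldr partialDeriv f) (interpPoint F w s)) ∂cubeMeasure n := by
  have hℓF : ℓ ∉ F := fun h => hℓ (linked_of_mem (by exact_mod_cast h))
  unfold minEdgeIntegral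
  set H := (insert ℓ F).toList.foldr partialDeriv f
  have hH : Continuous H := (contDiff_foldr_partialDeriv hf _).continuous
  have hmp := measurePreserving_update (n := n) ℓ
  have hint := integrable_minEdge hH (insert ℓ F) ℓ
  nth_rewrite 1 [← hmp.map_eq]
  rw [integral_map hmp.measurable.aemeasurable (by rw [hmp.map_eq]; exact hint.1)]
  refine (integral_prod _ (hmp.integrable_comp_of_integrable hint)).trans ?_
  refine integral_congr_ae ?_
  filter_upwards [ae_mem_cube n] with w hw
  have hm0 : 0 ≤ minWeight F w := le_minWeight.2 ⟨zero_le_one, fun p _ => (hw p).1⟩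
  have hm1 : minWeight F w ≤ 1 := (le_minWeight.1 le_rfl).1
  have hpt : ∀ s ∈ Set.Icc (0 : ℝ) 1,
      {v : PairIdx n → ℝ | ∀ p ∈ insert ℓ F, v ℓ ≤ v p}.indicator
        (fun v => H (interpPoint (insert ℓ F) v (v ℓ))) (Function.update w ℓ s) =
      (Set.Icc 0 (minWeight F w)).indicator (fun s => H (interpPoint F w s)) s := by
    intro s hs
    have hiff : Function.update w ℓ s ∈ {v : PairIdx n → ℝ | ∀ p ∈ insert ℓ F, v ℓ ≤ v p} ↔
        ∀ p ∈ F, s ≤ w p := by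
      have hne : ∀ p ∈ F, p ≠ ℓ := fun p hp h => hℓF (h ▸ hp)
      have : ∀ p ∈ F, Function.update w ℓ s p = w p := fun p hp =>
        Function.update_of_ne (hne p hp) _ _
      simp only [Set.mem_ofPred_eq, Finset.forall_mem_insert, Function.update_self, le_refl,
        true_and]
      exact forall₂_congr fun p hp => by rw [this p hp]
    by_cases h : ∀ p ∈ F, s ≤ w p
    · rw [Set.indicator_of_mem (hiff.2 h),
        Set.indicator_of_mem (Set.mem_Icc.2 ⟨hs.1, le_minWeight.2 ⟨hs.2, h⟩⟩),
        Function.update_self, interpPoint_insert hℓ h]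
    · rw [Set.indicator_of_notMem (mt hiff.1 h),
        Set.indicator_of_notMem fun h' => h (le_minWeight.1 h'.2).2]
  refine (setIntegral_congr_fun measurableSet_Icc hpt).trans ?_
  rw [setIntegral_indicator measurableSet_Icc,
    Set.inter_eq_self_of_subset_right (Set.Icc_subset_Icc_right hm1),
    integral_Icc_eq_integral_Ioc, ← intervalIntegral.integral_of_le hm0]

open Classical in
/-- The fundamental theorem of calculus for a forest `F`, moving all the pairs not linked by `F`
from `0` to the minimal weight of `F`. -/
lemma integral_sub_eq_sum_minEdgeIntegral {n : ℕ} {f : (PairIdx n → ℝ) → ℝ}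
    (hf : ContDiff ℝ (⊤ : ℕ∞) f) (F : Finset (PairIdx n)) :
    (∫ w, (F.toList.foldr partialDeriv f) (interpPoint F w (minWeight F w)) ∂cubeMeasure n) -
      ∫ w, (F.toList.foldr partialDeriv f) (interpPoint F w 0) ∂cubeMeasure n =
    ∑ ℓ ∈ Finset.univ.filter (fun ℓ => ¬ Linked (F : Set (PairIdx n)) ℓ),
      minEdgeIntegral f (insert ℓ F) ℓ := by
  have hg := contDiff_foldr_partialDeriv hf F.toList
  have hcont : ∀ ℓ, Continuous fun x : (PairIdx n → ℝ) × ℝ =>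
      partialDeriv ℓ (F.toList.foldr partialDeriv f) (interpPoint F x.1 x.2) := fun ℓ =>
    (contDiff_partialDeriv ℓ hg).continuous.comp (continuous_interpPoint F)
  have hpar : ∀ ℓ, Continuous fun w : PairIdx n → ℝ => ∫ s in (0 : ℝ)..minWeight F w,
      partialDeriv ℓ (F.toList.foldr partialDeriv f) (interpPoint F w s) := fun ℓ =>
    intervalIntegral.continuous_parametric_intervalIntegral_of_continuous (hcont ℓ)
      (continuous_minWeight F)
  have hterm : ∀ ℓ ∈ Finset.univ.filter (fun ℓ => ¬ Linked (F : Set (PairIdx n)) ℓ),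
      minEdgeIntegral f (insert ℓ F) ℓ = ∫ w, (∫ s in (0 : ℝ)..minWeight F w,
        partialDeriv ℓ (F.toList.foldr partialDeriv f) (interpPoint F w s)) ∂cubeMeasure n := by
    intro ℓ hℓ
    have hℓ' := (Finset.mem_filter.1 hℓ).2
    rw [partialDeriv_foldr_toList hf fun h => hℓ' (linked_of_mem (by exact_mod_cast h))]
    exact minEdgeIntegral_insert hf hℓ'
  rw [Finset.sum_congr rfl hterm,
    ← integral_finsetSum _ fun ℓ _ => integrable_cubeMeasure (hpar ℓ), ← integral_sub]
  · congr 1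
    funext w
    have hc : ∀ ℓ, Continuous fun s : ℝ =>
        partialDeriv ℓ (F.toList.foldr partialDeriv f) (interpPoint F w s) := fun ℓ =>
      (hcont ℓ).comp (continuous_const.prodMk continuous_id)
    rw [← intervalIntegral.integral_finsetSum fun ℓ _ => (hc ℓ).intervalIntegrable _ _]
    exact (intervalIntegral.integral_eq_sub_of_hasDerivAt
      (fun s _ => hasDerivAt_comp_interpPoint F w hg s)
      ((continuous_finsetSum _ fun ℓ _ => hc ℓ).intervalIntegrable _ _)).symm
  · exact integrable_cubeMeasure (hg.continuous.comp
      ((continuous_interpPoint F).comp (continuous_id.prodMk (continuous_minWeight F))))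
  · exact integrable_cubeMeasure (hg.continuous.comp
      ((continuous_interpPoint F).comp (continuous_id.prodMk continuous_const)))

/-- Almost every point of the cube has exactly one edge of least weight. -/
lemma sum_minEdgeIntegral {n : ℕ} {f : (PairIdx n → ℝ) → ℝ} (hf : ContDiff ℝ (⊤ : ℕ∞) f)
    {G : Finset (PairIdx n)} (hG : G.Nonempty) :
    ∑ ℓ ∈ G, minEdgeIntegral f G ℓ =
      ∫ w, (G.toList.foldr partialDeriv f) (interpPoint G w (minWeight G w)) ∂cubeMeasure n := by
  have hg := (contDiff_foldr_partialDeriv hf G.toList).continuous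
  unfold minEdgeIntegral
  rw [← integral_finsetSum _ fun ℓ _ => integrable_minEdge hg G ℓ]
  refine integral_congr_ae ?_
  filter_upwards [ae_mem_cube n, ae_injective n] with w hw hinj
  obtain ⟨ℓ, hℓ, hmin⟩ := Finset.exists_min_image G w hG
  rw [Finset.sum_eq_single_of_mem ℓ hℓ,
    Set.indicator_of_mem (s := {v : PairIdx n → ℝ | ∀ p ∈ G, v ℓ ≤ v p}) hmin,
    minWeight_eq hℓ (hw ℓ).2 hmin]
  intro k hk hne
  refine Set.indicator_of_notMem (fun h => hne (hinj ?_)) _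
  exact le_antisymm (h ℓ hℓ) (hmin k hk)

open Classical in
/-- **BKAR forest interpolation formula.** For any smooth `f : ℝ^{P_n} → ℝ`,
`f(1,…,1) = ∑_F ∫_{[0,1]^F} (∏_{ℓ∈F} ∂_ℓ f)(x^F(w)) ∏_{ℓ∈F} dw_ℓ`, the sum ranging over
all forests `F` on `{1, …, n}` (including the empty forest). -/
theorem bkar_forest_formula (n : ℕ) (hn : 1 ≤ n)
    (f : (PairIdx n → ℝ) → ℝ) (hf : ContDiff ℝ (⊤ : ℕ∞) f) :
    f (fun _ => 1) =
      ∑ F ∈ Finset.univ.filter (fun F : Finset (PairIdx n) => IsForestOn F),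
        ∫ w in Set.univ.pi (fun _ : F => Set.Icc (0 : ℝ) 1),
          (F.toList.foldr partialDeriv f) (bkarPoint F w) := by
  have hL : ∀ F : Finset (PairIdx n),
      ∫ w in Set.univ.pi (fun _ : F => Set.Icc (0 : ℝ) 1),
        (F.toList.foldr partialDeriv f) (bkarPoint F w) =
      ∫ w, (F.toList.foldr partialDeriv f) (interpPoint F w 0) ∂cubeMeasure n := by
    intro F
    have hg := (contDiff_foldr_partialDeriv hf F.toList).continuous
    have hmp := measurePreserving_restrict_cube F
    rw [← hmp.map_eq, integral_map hmp.measurable.aemeasurable]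
    · simp only [interpPoint_zero]
    · exact (hg.comp (continuous_bkarPoint F)).aestronglyMeasurable
  -- `hsum` becomes `∑_F U_F - ∑_F L_F = ∑_{G ≠ ∅} U_G` once the empty forest is set apart.
  have hsum := sum_forest_insert (minEdgeIntegral f)
  simp only [← integral_sub_eq_sum_minEdgeIntegral hf, Finset.sum_sub_distrib] at hsum
  have hempty : (∅ : Finset (PairIdx n)) ∈
      Finset.univ.filter (fun F : Finset (PairIdx n) => IsForestOn F) :=
    Finset.mem_filter.2 ⟨Finset.mem_univ _, isForestOn_empty⟩
  rw [← Finset.add_sum_erase _ _ hempty,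
    ← Finset.add_sum_erase _ (fun G => ∑ ℓ ∈ G, minEdgeIntegral f G ℓ) hempty,
    Finset.sum_congr rfl (fun G hG => sum_minEdgeIntegral hf
      (Finset.nonempty_iff_ne_empty.2 (Finset.ne_of_mem_erase hG)))] at hsum
  have h1 : ∫ w, ((∅ : Finset (PairIdx n)).toList.foldr partialDeriv f)
      (interpPoint ∅ w (minWeight ∅ w)) ∂cubeMeasure n = f (fun _ => 1) := by
    simp [interpPoint_empty, minWeight]
  rw [h1, Finset.sum_empty] at hsum
  simp only [hL]
  linarith
end

section
/- Let G be a finite graph with vertex set {1,…,n} and edge set E ⊆ P_n. Then ∑_F ∫_{[0,1]^F} ( ∏_{ℓ∈E∖F} x^F_ℓ(w) ) ∏_{ℓ∈F} dw_ℓ = 1, where the sum ranges over all forests F ⊆ E, and x^F_ℓ(w), for a pair ℓ = {i,j}, equals the minimum of w_{ℓ'} over the edges ℓ' of the unique path in F joining i to j if i and j are connected in F, and equals 0 otherwise. In other words, the relative weights w(G,F) = ∫_{[0,1]^F} ∏_{ℓ∈E∖F} x^F_ℓ(w) ∏_{ℓ∈F} dw_ℓ of the forests of G are barycentric (percentage)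 factors summing to 1. -/
/-!
Give the pairs of `E` independent uniform weights `u ℓ` in `[0,1]`. Almost surely the weights are
distinct, and then `E` has exactly one maximum-weight spanning forest, which consists of the pairs
whose endpoints are not joined by strictly heavier edges (`kruskal`). A forest `F ⊆ E` is this
forest if and only if every pair `ℓ ∈ E \ F` is joined in `F` by edges strictly heavier than `ℓ`
(`mem_optimalSet_kruskal`, `eq_kruskal`), that is, `u ℓ < x^F_ℓ(u|_F)` (`lt_bkarPoint_iff`).

Given the weights `w` on `F`, these conditions are independent, with probabilities `x^F_ℓ(w)`. By
Fubini the probability that `F` is the maximum-weight spanning forest is therefore the weight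
`w(G,F)` (`integral_eq_measure`), and the probabilities of a partition into events sum to `1`.
-/

open MeasureTheory

/-- The graph on `Fin n` whose edges are the pairs in `S`. -/
def pairGraph {n : ℕ} (S : Set (PairIdx n)) : SimpleGraph (Fin n) :=
  SimpleGraph.fromEdgeSet {e : Sym2 (Fin n) | ∃ p ∈ S, e = s(p.val.1, p.val.2)}

/-- The endpoints of the pair `ℓ` lie in the same component of the graph with edge set `S`. -/
def Conn {n : ℕ} (S : Set (PairIdx n)) (ℓ : PairIdx n) : Prop :=
  (pairGraph S).Reachable ℓ.val.1 ℓ.val.2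

/-- The edges of `F` whose weight is strictly larger than `t`. -/
def superlevel {n : ℕ} (F : Finset (PairIdx n)) (w : F → ℝ) (t : ℝ) : Set (PairIdx n) :=
  {p | ∃ h : p ∈ F, t < w ⟨p, h⟩}

/-- For injective weights `u`, the maximum-weight spanning forest of `E`: the pairs of `E` whose
endpoints are not already joined by strictly heavier edges of `E`. -/
noncomputable def kruskal {n : ℕ} (E : Finset (PairIdx n)) (u : PairIdx n → ℝ) :
    Finset (PairIdx n) := by
  classical exact E.filter (fun ℓ => ¬ Conn {p | p ∈ E ∧ u ℓ < u p} ℓ)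

/-- The weights `u` for which every pair of `E` outside `F` is joined in `F` by strictly heavier
edges. For a forest `F ⊆ E` this says that `F` is the maximum-weight spanning forest of `E`. -/
def optimalSet {n : ℕ} (E F : Finset (PairIdx n)) : Set (PairIdx n → ℝ) :=
  {u | ∀ ℓ ∈ E, ℓ ∉ F → Conn (superlevel F (fun i => u i) (u ℓ)) ℓ}

/-! ### Connectivity in graphs of pairs -/

section Graph

variable {n : ℕ}

lemma pairGraph_adj {S : Set (PairIdx n)} {a b : Fin n} :
    (pairGraph S).Adj a b ↔
      ∃ p ∈ S, (p.val.1 = a ∧ p.val.2 = b) ∨ (p.val.1 = b ∧ p.val.2 = a) := by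
  simp only [pairGraph, SimpleGraph.fromEdgeSet_adj, Set.mem_ofPred_eq, Sym2.eq_iff]
  constructor
  · rintro ⟨⟨p, hp, h⟩, -⟩
    refine ⟨p, hp, ?_⟩
    rcases h with ⟨rfl, rfl⟩ | ⟨rfl, rfl⟩ <;> simp
  · rintro ⟨p, hp, h⟩
    have := p.2
    rcases h with ⟨rfl, rfl⟩ | ⟨rfl, rfl⟩
    · exact ⟨⟨p, hp, by simp⟩, this.ne⟩
    · exact ⟨⟨p, hp, by simp⟩, this.ne'⟩

lemma pairGraph_mono {S T : Set (PairIdx n)} (h : S ⊆ T) : pairGraph S ≤ pairGraph T := by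
  intro a b
  rw [pairGraph_adj, pairGraph_adj]
  rintro ⟨p, hp, h'⟩
  exact ⟨p, h hp, h'⟩

lemma Conn.mono {S T : Set (PairIdx n)} (h : S ⊆ T) {ℓ : PairIdx n} (hS : Conn S ℓ) :
    Conn T ℓ :=
  SimpleGraph.Reachable.mono (pairGraph_mono h) hS

lemma conn_of_mem {S : Set (PairIdx n)} {ℓ : PairIdx n} (h : ℓ ∈ S) : Conn S ℓ :=
  SimpleGraph.Adj.reachable (pairGraph_adj.2 ⟨ℓ, h, Or.inl ⟨rfl, rfl⟩⟩)

/-- Each edge of a connecting path may be replaced by a path. -/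
lemma Conn.trans {S T : Set (PairIdx n)} (h : ∀ p ∈ S, Conn T p) {ℓ : PairIdx n}
    (hS : Conn S ℓ) : Conn T ℓ := by
  have key : ∀ a b, (pairGraph S).Reachable a b → (pairGraph T).Reachable a b := by
    intro a b hab
    rw [SimpleGraph.reachable_iff_reflTransGen] at hab
    induction hab with
    | refl => exact SimpleGraph.Reachable.refl _
    | tail _ hbc ih =>
      refine ih.trans ?_
      obtain ⟨p, hp, ⟨rfl, rfl⟩ | ⟨rfl, rfl⟩⟩ := pairGraph_adj.1 hbc
      · exact h p hp
      · exact (h p hp).symm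
  exact key _ _ hS

/-- An edge of a forest is the only path between its endpoints. -/
lemma IsForestOn.not_conn {F : Finset (PairIdx n)} (hF : IsForestOn F) {ℓ : PairIdx n}
    (hℓ : ℓ ∈ F) {S : Set (PairIdx n)} (hS : ∀ p ∈ S, p ∈ F ∧ p ≠ ℓ) : ¬ Conn S ℓ := by
  intro hc
  have hF' : (pairGraph (F : Set (PairIdx n))).IsAcyclic := hF
  have hadj : (pairGraph (F : Set (PairIdx n))).Adj ℓ.val.1 ℓ.val.2 :=
    pairGraph_adj.2 ⟨ℓ, hℓ, Or.inl ⟨rfl, rfl⟩⟩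
  have hb := SimpleGraph.isAcyclic_iff_forall_adj_isBridge.1 hF' hadj
  rw [SimpleGraph.isBridge_iff] at hb
  apply hb
  refine SimpleGraph.Reachable.mono ?_ hc
  intro a b hab
  rw [SimpleGraph.deleteEdges_adj]
  obtain ⟨p, hp, h⟩ := pairGraph_adj.1 hab
  refine ⟨pairGraph_adj.2 ⟨p, (hS p hp).1, h⟩, ?_⟩
  intro hmem
  have hmem : s(a, b) = s(ℓ.val.1, ℓ.val.2) := by simpa using hmem
  apply (hS p hp).2
  have h1 := p.2
  have h2 := ℓ.2
  rw [Sym2.eq_iff] at hmem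
  apply Subtype.ext
  apply Prod.ext <;> grind

/-- Superlevel sets of the interpolation point. The restriction `0 ≤ t` accounts for the value `0`
at pairs that are not connected. -/
lemma lt_bkarPoint_iff {F : Finset (PairIdx n)} {w : F → ℝ} {ℓ : PairIdx n} {t : ℝ}
    (ht : 0 ≤ t) : t < bkarPoint F w ℓ ↔ Conn (superlevel F w t) ℓ := by
  unfold bkarPoint Conn
  rw [SimpleGraph.reachable_iff_reflTransGen]
  constructor
  · intro h
    rcases Set.eq_empty_or_nonempty {r : ℝ | Relation.ReflTransGen
      (fun u v => ∃ p : F, r ≤ w p ∧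
      ((p.val.val.1 = u ∧ p.val.val.2 = v) ∨ (p.val.val.1 = v ∧ p.val.val.2 = u)))
      ℓ.val.1 ℓ.val.2} with h0 | h0
    · rw [h0, Real.sSup_empty] at h
      exact absurd h (not_lt.2 ht)
    · obtain ⟨r, hr, htr⟩ := exists_lt_of_lt_csSup h0 h
      refine Relation.ReflTransGen.mono ?_ _ _ hr
      rintro a b ⟨p, hp, hab⟩
      exact pairGraph_adj.2 ⟨p, ⟨p.2, htr.trans_le hp⟩, hab⟩
  · intro h
    have hev : ∀ᶠ r in nhdsWithin t (Set.Ioi t), ∀ p : F, t < w p → r ≤ w p := by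
      rw [Filter.eventually_all]
      intro p
      by_cases hp : t < w p
      · filter_upwards [Ioo_mem_nhdsGT hp] with r hr _ using hr.2.le
      · exact Filter.Eventually.of_forall fun r h => absurd h hp
    obtain ⟨r, hr, htr⟩ := (hev.and self_mem_nhdsWithin).exists
    refine lt_of_lt_of_le htr (le_csSup ?_ ?_)
    · obtain ⟨M, hM⟩ := (Set.finite_range w).bddAbove
      refine ⟨M, fun r hr => ?_⟩
      rcases Relation.ReflTransGen.cases_head hr with h | ⟨c, ⟨p, hp, -⟩, -⟩
      · exact absurd h ℓ.2.ne
      · exact hp.trans (hM ⟨p, rfl⟩)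
    · refine Relation.ReflTransGen.mono ?_ _ _ h
      intro a b hab
      obtain ⟨p, ⟨hpF, hp⟩, hab⟩ := pairGraph_adj.1 hab
      exact ⟨⟨p, hpF⟩, hr _ hp, hab⟩

lemma bkarPoint_le_one {F : Finset (PairIdx n)} {w : F → ℝ} (hw : ∀ p, w p ≤ 1)
    (ℓ : PairIdx n) : bkarPoint F w ℓ ≤ 1 := by
  by_contra! h
  have h := (lt_bkarPoint_iff zero_le_one).1 h
  have h0 : superlevel F w 1 = ∅ := by
    ext p
    simpa [superlevel] using fun h => hw ⟨p, h⟩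
  rw [h0, Conn, SimpleGraph.reachable_iff_reflTransGen] at h
  rcases Relation.ReflTransGen.cases_head h with h | ⟨c, h, -⟩
  · exact ℓ.2.ne h
  · obtain ⟨p, hp, -⟩ := pairGraph_adj.1 h
    exact hp

lemma bkarPoint_nonneg {F : Finset (PairIdx n)} {w : F → ℝ} (hw : ∀ p, 0 ≤ w p)
    (ℓ : PairIdx n) : 0 ≤ bkarPoint F w ℓ := by
  unfold bkarPoint
  rcases Set.eq_empty_or_nonempty {r : ℝ | Relation.ReflTransGen
      (fun u v => ∃ p : F, r ≤ w p ∧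
      ((p.val.val.1 = u ∧ p.val.val.2 = v) ∨ (p.val.val.1 = v ∧ p.val.val.2 = u)))
      ℓ.val.1 ℓ.val.2} with h0 | ⟨r, hr⟩
  · rw [h0, Real.sSup_empty]
  · refine Real.sSup_nonneg' ⟨0, ?_, le_rfl⟩
    refine Relation.ReflTransGen.mono ?_ _ _ hr
    rintro a b ⟨p, -, hab⟩
    exact ⟨p, hw p, hab⟩

/-! ### The maximum-weight spanning forest -/

lemma mem_kruskal {E : Finset (PairIdx n)} {u : PairIdx n → ℝ} {ℓ : PairIdx n} :
    ℓ ∈ kruskal E u ↔ ℓ ∈ E ∧ ¬ Conn {p | p ∈ E ∧ u ℓ < u p} ℓ := by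
  simp [kruskal]

lemma isForestOn_kruskal {E : Finset (PairIdx n)} {u : PairIdx n → ℝ}
    (hu : Function.Injective u) : IsForestOn (kruskal E u) := by
  change (pairGraph (kruskal E u : Set (PairIdx n))).IsAcyclic
  intro a c hc
  -- the lightest edge of a cycle would be joined by strictly heavier edges
  let C : Set (PairIdx n) := {p | p ∈ kruskal E u ∧ s(p.val.1, p.val.2) ∈ c.edges}
  have hedge : ∀ e ∈ c.edges, ∃ p ∈ C, e = s(p.val.1, p.val.2) := by
    intro e he
    have h := c.edges_subset_edgeSet he
    simp only [pairGraph, SimpleGraph.edgeSet_fromEdgeSet] at h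
    obtain ⟨⟨p, hp, rfl⟩, -⟩ := h
    exact ⟨p, ⟨hp, he⟩, rfl⟩
  have hne : C.Nonempty := by
    have hl := hc.three_le_length
    rw [← SimpleGraph.Walk.length_edges] at hl
    obtain ⟨e, he⟩ := List.exists_mem_of_length_pos (l := c.edges) (by omega)
    obtain ⟨p, hp, -⟩ := hedge e he
    exact ⟨p, hp⟩
  obtain ⟨ℓ, hℓ, hmin⟩ := Set.exists_min_image C u (Set.toFinite C) hne
  apply (mem_kruskal.1 hℓ.1).2
  have hCe : ∀ e ∈ c.edges, e ∈ (pairGraph C).edgeSet := by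
    intro e he
    obtain ⟨p, hp, rfl⟩ := hedge e he
    exact pairGraph_adj.2 ⟨p, hp, Or.inl ⟨rfl, rfl⟩⟩
  have hcyc := hc.transfer hCe
  have key := (SimpleGraph.adj_and_reachable_delete_edges_iff_exists_cycle (G := pairGraph C)
    (v := ℓ.val.1) (w := ℓ.val.2)).2 ⟨a, _, hcyc, by
      rw [SimpleGraph.Walk.edges_transfer]; exact hℓ.2⟩
  refine SimpleGraph.Reachable.mono ?_ key.2
  intro x y hxy
  rw [SimpleGraph.deleteEdges_adj] at hxy
  obtain ⟨h1, h2⟩ := hxy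
  obtain ⟨p, hp, hab⟩ := pairGraph_adj.1 h1
  refine pairGraph_adj.2 ⟨p, ⟨(mem_kruskal.1 hp.1).1, lt_of_le_of_ne (hmin p hp) ?_⟩, hab⟩
  intro h
  have h := hu h
  subst h
  apply h2
  rw [Set.mem_singleton_iff, Sym2.eq_iff]
  grind

/-- Paths in `E` above a given threshold can be rerouted through the maximum-weight spanning
forest above the same threshold. -/
lemma conn_kruskal {E : Finset (PairIdx n)} {u : PairIdx n → ℝ} {t : ℝ} {ℓ : PairIdx n}
    (hℓ : ℓ ∈ E) (ht : t < u ℓ) : Conn {p | p ∈ kruskal E u ∧ t < u p} ℓ := by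
  -- induction on the pairs, ordered by decreasing weight
  have hwf : WellFounded (fun p q : PairIdx n => u q < u p) := by
    have : IsStrictOrder (PairIdx n) (fun p q => u q < u p) :=
      { irrefl := fun a => lt_irrefl _
        trans := fun a b c h1 h2 => lt_trans h2 h1 }
    exact Finite.wellFounded_of_trans_of_irrefl _
  induction ℓ using hwf.induction with
  | _ ℓ ih =>
    by_cases hk : ℓ ∈ kruskal E u
    · exact conn_of_mem ⟨hk, ht⟩
    · have : Conn {p | p ∈ E ∧ u ℓ < u p} ℓ := by
        by_contra h
        exact hk (mem_kruskal.2 ⟨hℓ, h⟩)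
      exact this.trans fun p hp => ih p hp.2 hp.1 (ht.trans hp.2)

lemma mem_optimalSet_kruskal (E : Finset (PairIdx n)) (u : PairIdx n → ℝ) :
    u ∈ optimalSet E (kruskal E u) := by
  intro ℓ hℓ hk
  have : Conn {p | p ∈ E ∧ u ℓ < u p} ℓ := by
    by_contra h
    exact hk (mem_kruskal.2 ⟨hℓ, h⟩)
  refine this.trans fun p hp => ?_
  refine (conn_kruskal hp.1 hp.2).mono ?_
  rintro q ⟨h1, h2⟩
  exact ⟨h1, h2⟩

lemma eq_kruskal {E F : Finset (PairIdx n)} (hFE : F ⊆ E) (hF : IsForestOn F)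
    {u : PairIdx n → ℝ} (hu : u ∈ optimalSet E F) : F = kruskal E u := by
  ext ℓ
  rw [mem_kruskal]
  constructor
  · intro hℓ
    refine ⟨hFE hℓ, fun hc => ?_⟩
    refine hF.not_conn hℓ (S := {p | p ∈ F ∧ u ℓ < u p}) ?_ (hc.trans ?_)
    · rintro p ⟨hp, hlt⟩
      refine ⟨hp, ?_⟩
      rintro rfl
      exact lt_irrefl _ hlt
    · rintro p ⟨hpE, hlt⟩
      by_cases hp : p ∈ F
      · exact conn_of_mem ⟨hp, hlt⟩
      · refine (hu p hpE hp).mono ?_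
        rintro q ⟨hq, hpq⟩
        exact ⟨hq, hlt.trans hpq⟩
  · rintro ⟨hE, hc⟩
    by_contra hℓ
    refine hc ((hu ℓ hE hℓ).mono ?_)
    rintro q ⟨hq, h⟩
    exact ⟨hFE hq, h⟩

end Graph

/-! ### Probabilities -/

section Measure

variable {n : ℕ}

/-- The uniform probability measure on `[0,1]`. -/
noncomputable def unif : Measure ℝ := volume.restrict (Set.Icc 0 1)

instance : IsProbabilityMeasure unif := ⟨by simp [unif]⟩

lemma ae_injective_s8 : ∀ᵐ u ∂(Measure.pi fun _ : PairIdx n => unif), Function.Injective u := by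
  have hvol : ∀ᵐ u : PairIdx n → ℝ, Function.Injective u := by
    have : ∀ i j : PairIdx n, ∀ᵐ u : PairIdx n → ℝ, u i = u j → i = j := by
      intro i j
      by_cases hij : i = j
      · exact Filter.Eventually.of_forall fun _ _ => hij
      -- the hyperplane `u i = u j` is a proper subspace
      let L : (PairIdx n → ℝ) →ₗ[ℝ] ℝ :=
        LinearMap.proj (R := ℝ) (φ := fun _ : PairIdx n => ℝ) i -
          LinearMap.proj (R := ℝ) (φ := fun _ : PairIdx n => ℝ) j
      have h := Measure.addHaar_submodule (volume : Measure (PairIdx n → ℝ)) (LinearMap.ker L) (by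
        intro h
        have h1 : Pi.single i (1 : ℝ) ∈ LinearMap.ker L := h ▸ Submodule.mem_top
        have hji : j ≠ i := fun h => hij h.symm
        simp [L, hji] at h1)
      rw [ae_iff]
      refine measure_mono_null ?_ h
      intro u hu
      simp only [Set.mem_ofPred_eq, Classical.not_imp] at hu
      simp [L, hu.1]
    filter_upwards [ae_all_iff.2 fun i => ae_all_iff.2 (this i)] with u hu i j h using hu i j h
  have : (Measure.pi fun _ : PairIdx n => unif) =
      volume.restrict (Set.univ.pi fun _ => Set.Icc (0 : ℝ) 1) := by
    rw [volume_pi, Measure.restrict_pi_pi]; rfl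
  rw [this]
  exact ae_restrict_of_ae hvol

lemma measurableSet_optimalSet (E F : Finset (PairIdx n)) : MeasurableSet (optimalSet E F) := by
  have : optimalSet E F = ⋂ ℓ : PairIdx n,
      {u | ℓ ∈ E → ℓ ∉ F → Conn (superlevel F (fun i => u i) (u ℓ)) ℓ} := by
    ext u
    simp [optimalSet]
  rw [this]
  refine MeasurableSet.iInter fun ℓ => ?_
  -- the condition depends only on the finitely many comparisons `u ℓ < u p`
  let φ : (PairIdx n → ℝ) → (PairIdx n → Prop) := fun u p => u ℓ < u p
  have hφ : Measurable φ := by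
    refine measurable_pi_iff.2 fun p => ?_
    exact Measurable.lt (measurable_pi_apply ℓ) (measurable_pi_apply p)
  have h : MeasurableSet
      {b : PairIdx n → Prop | ℓ ∈ E → ℓ ∉ F → Conn {p | ∃ _ : p ∈ F, b p} ℓ} :=
    MeasurableSet.of_discrete
  exact hφ h

lemma unif_conn {F : Finset (PairIdx n)} {w : F → ℝ} (hw : ∀ p, w p ≤ 1) (ℓ : PairIdx n) :
    unif {t | Conn (superlevel F w t) ℓ} = ENNReal.ofReal (bkarPoint F w ℓ) := by
  have h1 := bkarPoint_le_one hw ℓ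
  rw [unif, Measure.restrict_apply' measurableSet_Icc]
  have : {t | Conn (superlevel F w t) ℓ} ∩ Set.Icc 0 1 = Set.Ico 0 (bkarPoint F w ℓ) := by
    ext t
    simp only [Set.mem_inter_iff, Set.mem_ofPred_eq, Set.mem_Icc, Set.mem_Ico]
    constructor
    · rintro ⟨h, h0, -⟩
      exact ⟨h0, (lt_bkarPoint_iff h0).2 h⟩
    · rintro ⟨h0, h⟩
      exact ⟨(lt_bkarPoint_iff h0).1 h, h0, (h.trans_le h1).le⟩
  rw [this, Real.volume_Ico, sub_zero]

open Classical in
/-- Conditionally on the weights of `F`, the events that the pairs of `E` outside `F` are lighter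
than their paths in `F` are independent, with probabilities the coordinates of the interpolation
point. -/
lemma integral_eq_measure (E F : Finset (PairIdx n)) :
    ∫ w in Set.univ.pi (fun _ : F => Set.Icc (0 : ℝ) 1), ∏ ℓ ∈ E \ F, bkarPoint F w ℓ =
      ((Measure.pi fun _ : PairIdx n => unif) (optimalSet E F)).toReal := by
  let ν : Measure ({i // i ∉ F} → ℝ) := Measure.pi fun _ => unif
  let μ : Measure (F → ℝ) := Measure.pi fun _ => unif
  have hμ : (volume : Measure (F → ℝ)).restrict (Set.univ.pi fun _ => Set.Icc (0 : ℝ) 1) = μ := by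
    rw [volume_pi, Measure.restrict_pi_pi]; rfl
  let e := MeasurableEquiv.piEquivPiSubtypeProd (fun _ : PairIdx n => ℝ) (fun i => i ∈ F)
  have he : MeasurePreserving e (Measure.pi fun _ : PairIdx n => unif) (μ.prod ν) := by
    convert measurePreserving_piEquivPiSubtypeProd (fun _ : PairIdx n => unif) (fun i => i ∈ F)
  have hA := measurableSet_optimalSet E F
  have hA' : MeasurableSet (e.symm ⁻¹' optimalSet E F) := e.symm.measurable hA
  have hP : (Measure.pi fun _ : PairIdx n => unif) (optimalSet E F) =
      ∫⁻ w, ν (Prod.mk w ⁻¹' (e.symm ⁻¹' optimalSet E F)) ∂μ := by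
    rw [← Measure.prod_apply hA', ← he.measure_preimage_equiv]
    congr 1
    ext u
    simp
  have hsec : ∀ w : F → ℝ, Prod.mk w ⁻¹' (e.symm ⁻¹' optimalSet E F) =
      Set.univ.pi fun i : {i // i ∉ F} =>
        if i.1 ∈ E then {t | Conn (superlevel F w t) i.1} else Set.univ := by
    intro w
    ext v
    have h1 : ∀ i : F, e.symm (w, v) i = w i := fun i => by
      simp [e, MeasurableEquiv.piEquivPiSubtypeProd, Equiv.piEquivPiSubtypeProd]
    have h2 : ∀ i : {i // i ∉ F}, e.symm (w, v) i = v i := fun i => by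
      simp [e, MeasurableEquiv.piEquivPiSubtypeProd, Equiv.piEquivPiSubtypeProd, i.2]
    simp only [Set.mem_preimage, optimalSet, Set.mem_ofPred_eq, h1, Set.mem_pi, Set.mem_univ,
      true_imp_iff]
    constructor
    · intro h i
      split_ifs with hi
      · have := h i hi i.2
        rwa [h2] at this
      · trivial
    · intro h i hE hF
      have := h ⟨i, hF⟩
      rw [if_pos hE] at this
      rw [h2 ⟨i, hF⟩]
      exact this
  rw [hμ, hP, ← integral_toReal (measurable_measure_prodMk_left hA').aemeasurable
    (Filter.Eventually.of_forall fun w => measure_lt_top _ _)]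
  refine integral_congr_ae ?_
  have hcube : ∀ᵐ w ∂μ, w ∈ Set.univ.pi fun _ : F => Set.Icc (0 : ℝ) 1 := by
    rw [← hμ]
    exact ae_restrict_mem (MeasurableSet.univ_pi fun _ => measurableSet_Icc)
  filter_upwards [hcube] with w hw
  have hw0 : ∀ p, 0 ≤ w p := fun p => (hw p trivial).1
  have hw1 : ∀ p, w p ≤ 1 := fun p => (hw p trivial).2
  rw [hsec, Measure.pi_pi, ENNReal.toReal_prod]
  have : ∀ i : {i // i ∉ F}, (unif (if i.1 ∈ E then {t | Conn (superlevel F w t) i.1}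
      else Set.univ)).toReal = if i.1 ∈ E then bkarPoint F w i.1 else 1 := by
    intro i
    split_ifs
    · rw [unif_conn hw1, ENNReal.toReal_ofReal (bkarPoint_nonneg hw0 _)]
    · simp
  simp only [this]
  rw [← Finset.prod_subtype (Finset.univ.filter fun i => i ∉ F) (by simp)
    (fun i => if i ∈ E then bkarPoint F w i else 1), ← Finset.prod_filter]
  congr 1
  ext i
  simp [and_comm]

end Measure

open Classical in
/-- **The BKAR forest weights are barycentric.** For a finite graph `G` on `{1, …, n}`
with edge set `E ⊆ P_n`, the relative weights
`w(G,F) = ∫_{[0,1]^F} ∏_{ℓ ∈ E∖F} x^F_ℓ(w) ∏_{ℓ∈F} dw_ℓ` of the forests `F ⊆ E`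
sum to `1`. -/
theorem bkar_weights_sum_to_one (n : ℕ) (E : Finset (PairIdx n)) :
    ∑ F ∈ E.powerset.filter (fun F : Finset (PairIdx n) => IsForestOn F),
      ∫ w in Set.univ.pi (fun _ : F => Set.Icc (0 : ℝ) 1),
        ∏ ℓ ∈ E \ F, bkarPoint F w ℓ = 1 := by
  have hterm := fun F => integral_eq_measure E F
  simp only [hterm]
  rw [← ENNReal.toReal_sum fun F _ => measure_ne_top _ _, ← measure_biUnion_finset]
  · have : (⋃ F ∈ E.powerset.filter (fun F : Finset (PairIdx n) => IsForestOn F),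
        optimalSet E F) =ᵐ[Measure.pi fun _ : PairIdx n => unif] Set.univ := by
      rw [Filter.eventuallyEq_univ]
      filter_upwards [ae_injective_s8] with u hu
      simp only [Set.mem_iUnion]
      refine ⟨kruskal E u, ?_, mem_optimalSet_kruskal E u⟩
      rw [Finset.mem_filter, Finset.mem_powerset]
      exact ⟨fun ℓ hℓ => (mem_kruskal.1 hℓ).1, isForestOn_kruskal hu⟩
    rw [measure_congr this, measure_univ, ENNReal.toReal_one]
  · intro F hF F' hF' hne
    simp only [Finset.coe_filter, Finset.mem_powerset, Set.mem_ofPred_eq] at hF hF'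
    refine Set.disjoint_left.2 fun u hu hu' => hne ?_
    rw [eq_kruskal hF.1 hF.2 hu, ← eq_kruskal hF'.1 hF'.2 hu']
  · exact fun F _ => measurableSet_optimalSet E F
end

section
/- Let d > 2 be an integer and m > 0 a real number. There exists a constant K > 0 such that for all κ ∈ (0,1] and all x, y ∈ ℝ^d, the ultraviolet-regularized propagator C_κ(x,y) = ∫_κ^∞ e^{−m²α − ‖x−y‖²/(4α)} α^{−d/2} dα satisfies |C_κ(x,y)| ≤ K · κ^{1−d/2} · e^{−m‖x−y‖}. -/
/-! The exponent is bounded above by the arithmetic-geometric mean inequality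
`m²α + r²/(4α) ≥ m r`, with `r = ‖x - y‖`. This pulls the decay factor `e^{-m r}` out of the
integral, and what remains is `∫_κ^∞ α^{-d/2} dα = κ^{1-d/2} / (d/2 - 1)`, finite because
`d > 2`. Hence `K = (d/2 - 1)⁻¹` works. -/


/-- **Bound on the ultraviolet-regularized propagator.** For `d > 2` and `m > 0` there is
a constant `K > 0` such that for every cutoff `κ ∈ (0,1]` and all `x, y ∈ ℝ^d`, the
regularized propagator `C_κ(x,y) = ∫_κ^∞ e^{-m²α - ‖x-y‖²/(4α)} α^{-d/2} dα` satisfies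
`|C_κ(x,y)| ≤ K · κ^{1-d/2} · e^{-m‖x-y‖}`. -/
theorem uv_propagator_bound (d : ℕ) (hd : 2 < d) (m : ℝ) (hm : 0 < m) :
    ∃ K > 0, ∀ κ ∈ Set.Ioc (0 : ℝ) 1, ∀ x y : EuclideanSpace ℝ (Fin d),
      |∫ α in Set.Ioi κ,
          Real.exp (-m ^ 2 * α - ‖x - y‖ ^ 2 / (4 * α)) * α ^ (-(d : ℝ) / 2)| ≤
        K * κ ^ (1 - (d : ℝ) / 2) * Real.exp (-m * ‖x - y‖) := by
  have hd' : (2 : ℝ) < d := by exact_mod_cast hd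
  have hpos : 0 < (d : ℝ) / 2 - 1 := by linarith
  have ha : -(d : ℝ) / 2 < -1 := by linarith
  refine ⟨((d : ℝ) / 2 - 1)⁻¹, inv_pos.mpr hpos, ?_⟩
  rintro κ ⟨hκ, -⟩ x y
  set r := ‖x - y‖
  have hbound : ∀ α ∈ Set.Ioi κ,
      ‖Real.exp (-m ^ 2 * α - r ^ 2 / (4 * α)) * α ^ (-(d : ℝ) / 2)‖ ≤
        Real.exp (-m * r) * α ^ (-(d : ℝ) / 2) := by
    intro α hα
    have hα0 : 0 < α := hκ.trans hα
    rw [Real.norm_of_nonneg (by positivity)]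
    gcongr
    -- The difference of the two exponents is a perfect square over `4 α`.
    have hsq : -m * r - (-m ^ 2 * α - r ^ 2 / (4 * α)) = (2 * m * α - r) ^ 2 / (4 * α) := by
      field_simp
      ring
    have hnn : 0 ≤ (2 * m * α - r) ^ 2 / (4 * α) := by positivity
    linarith
  have hint := (integrableOn_Ioi_rpow_of_lt ha hκ).const_mul (Real.exp (-m * r))
  calc _ ≤ ∫ α in Set.Ioi κ, Real.exp (-m * r) * α ^ (-(d : ℝ) / 2) :=
        MeasureTheory.norm_integral_le_of_norm_le hint
          ((MeasureTheory.ae_restrict_iff' measurableSet_Ioi).mpr (.of_forall hbound))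
    _ = _ := by
        rw [MeasureTheory.integral_const_mul, integral_Ioi_rpow_of_lt ha hκ,
          show -(d : ℝ) / 2 + 1 = -((d : ℝ) / 2 - 1) by ring, neg_div_neg_eq,
          neg_sub, div_eq_mul_inv]
        ring
end

section
/- Let d > 2 be an integer, m > 0 a real number, and M > 1 a real number. There exists a constant K > 0 such that for every integer i ≥ 1 and all x, y ∈ ℝ^d, the momentum-slice propagator C_i(x,y) = ∫_{M^{−2i}}^{M^{−2(i−1)}} e^{−m²α − ‖x−y‖²/(4α)} α^{−d/2} dα satisfies |C_i(x,y)| ≤ K · M^{(d−2)i} · e^{−M^i ‖x−y‖}. -/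
/-! Write `b = M ^ i` and `r = ‖x - y‖`. The slice is `[b⁻², M² b⁻²]`, of length at most `M² b⁻²`.
On it `α ^ (-d/2) ≤ b ^ d`, and completing the square gives `b r ≤ r² / (4α) + α b²` with
`α b² ≤ M²`, so the integrand is at most `exp (M²) * exp (-b r) * b ^ d`. Multiplying by the length
gives the bound with `K = M² exp (M²)`; the mass only improves it. -/

/-- Weighted AM-GM: `r² / (4α) + α b² - b r = (r - 2αb)² / (4α)`. -/
lemma mul_le_sq_div_add {α : ℝ} (hα : 0 < α) (b r : ℝ) :
    b * r ≤ r ^ 2 / (4 * α) + α * b ^ 2 := by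
  have h : r ^ 2 / (4 * α) + α * b ^ 2 - b * r = (r - 2 * α * b) ^ 2 / (4 * α) := by
    field_simp
    ring
  have : 0 ≤ (r - 2 * α * b) ^ 2 / (4 * α) := by positivity
  linarith

/-- **Bound on the sliced propagator.** For `d > 2`, `m > 0` and `M > 1` there is a
constant `K > 0` such that for every slice index `i ≥ 1` and all `x, y ∈ ℝ^d`, the slice
propagator `C_i(x,y) = ∫_{M^{-2i}}^{M^{-2(i-1)}} e^{-m²α - ‖x-y‖²/(4α)} α^{-d/2} dα`
satisfies `|C_i(x,y)| ≤ K · M^{(d-2)i} · e^{-M^i ‖x-y‖}`. -/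
theorem slice_propagator_bound (d : ℕ) (hd : 2 < d) (m : ℝ) (hm : 0 < m)
    (M : ℝ) (hM : 1 < M) :
    ∃ K > 0, ∀ i : ℕ, 1 ≤ i → ∀ x y : EuclideanSpace ℝ (Fin d),
      |∫ α in Set.Icc (M ^ (-(2 * i : ℤ))) (M ^ (2 - 2 * (i : ℤ))),
          Real.exp (-m ^ 2 * α - ‖x - y‖ ^ 2 / (4 * α)) * α ^ (-(d : ℝ) / 2)| ≤
        K * M ^ ((d - 2) * i) * Real.exp (-(M ^ i) * ‖x - y‖) := by
  have hM0 : 0 < M := by linarith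
  refine ⟨M ^ 2 * Real.exp (M ^ 2), by positivity, fun i _ x y => ?_⟩
  set r := ‖x - y‖
  obtain ⟨b, hb⟩ : ∃ b, b = M ^ i := ⟨_, rfl⟩
  have hb0 : 0 < b := hb ▸ pow_pos hM0 i
  have e1 : M ^ (-(2 * i : ℤ)) = (b ^ 2)⁻¹ := by
    rw [zpow_neg, hb, ← pow_mul, mul_comm i 2]
    norm_cast
  have e2 : M ^ (2 - 2 * (i : ℤ)) = M ^ 2 * (b ^ 2)⁻¹ := by
    rw [sub_eq_add_neg, zpow_add₀ hM0.ne', e1]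
    norm_cast
  have e3 : M ^ ((d - 2) * i) = b ^ (d - 2) := by
    rw [hb, ← pow_mul, mul_comm]
  rw [e1, e2, e3, ← hb, ← Real.norm_eq_abs]
  have key : ∀ α ∈ Set.Icc ((b ^ 2)⁻¹) (M ^ 2 * (b ^ 2)⁻¹),
      ‖Real.exp (-m ^ 2 * α - r ^ 2 / (4 * α)) * α ^ (-(d : ℝ) / 2)‖ ≤
        Real.exp (M ^ 2) * Real.exp (-b * r) * b ^ d := by
    rintro α ⟨h1, h2⟩
    have hα : 0 < α := lt_of_lt_of_le (by positivity) h1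
    rw [Real.norm_of_nonneg (by positivity), ← Real.exp_add]
    gcongr
    · have h3 : α * b ^ 2 ≤ M ^ 2 := by
        rwa [← div_eq_mul_inv, le_div_iff₀ (by positivity)] at h2
      have h4 := mul_le_sq_div_add hα b r
      have h5 : 0 ≤ m ^ 2 * α := by positivity
      linarith
    · have h3 : α ^ (-(d : ℝ) / 2) ≤ ((b ^ 2)⁻¹) ^ (-(d : ℝ) / 2) :=
        Real.rpow_le_rpow_of_nonpos (by positivity) h1
          (by have : (0 : ℝ) ≤ d := Nat.cast_nonneg d
              linarith)
      refine h3.trans_eq ?_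
      rw [neg_div, Real.rpow_neg (by positivity), Real.inv_rpow (by positivity), inv_inv,
        ← Real.rpow_natCast b 2, ← Real.rpow_mul hb0.le, ← Real.rpow_natCast b d]
      congr 1
      push_cast
      ring
  refine (MeasureTheory.norm_setIntegral_le_of_norm_le_const (by simp) key).trans ?_
  have hvol : MeasureTheory.volume.real (Set.Icc ((b ^ 2)⁻¹) (M ^ 2 * (b ^ 2)⁻¹)) ≤
      M ^ 2 * (b ^ 2)⁻¹ := by
    rw [MeasureTheory.measureReal_def, Real.volume_Icc]
    refine ENNReal.toReal_le_of_le_ofReal (by positivity) (ENNReal.ofReal_le_ofReal ?_)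
    have : 0 ≤ (b ^ 2)⁻¹ := by positivity
    linarith
  have hbd : b ^ d = b ^ (d - 2) * b ^ 2 := by
    rw [← pow_add]
    congr 1
    omega
  calc _ ≤ Real.exp (M ^ 2) * Real.exp (-b * r) * b ^ d * (M ^ 2 * (b ^ 2)⁻¹) := by gcongr
    _ = _ := by
      rw [hbd]
      field_simp
end

section
/- Let v₁, v₂, v₃, v₄ be vectors in ℝ² with equal Euclidean norms, ‖v₁‖ = ‖v₂‖ = ‖v₃‖ = ‖v₄‖, and satisfying v₁ + v₂ + v₃ + v₄ = 0. Then the four vectors pair up into two antipodal pairs: either (v₁ + v₂ = 0 and v₃ + v₄ = 0), or (v₁ + v₃ = 0 and v₂ + v₄ = 0), or (v₁ + v₄ = 0 and v₂ + v₃ = 0). -/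
/-!
The three pair sums `v₁ + v₂`, `v₁ + v₃`, `v₁ + v₄` are mutually orthogonal
(`inner_pair_sums_eq_zero`, valid in any real inner product space). Three mutually orthogonal
vectors of a plane cannot all be nonzero (`eq_zero_of_pairwise_orthogonal`), so one pair sum
vanishes, and then the complementary pair sums to zero as well. The dimension enters only in the
second step, which is what fails in ℝ³.
-/

open scoped RealInnerProductSpace in
/-- Writing `p, q, t` for `a + b, a + c, a + d`, one has `p + q + t = 2a`, and `‖p - a‖ = ‖a‖` says
`⟪p, p⟫ = 2⟪p, a⟫ = ⟪p, p + q + t⟫`, i.e. `⟪p, q⟫ + ⟪p, t⟫ = 0`. The two analogous relations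
together with this one force `⟪p, q⟫ = ⟪p, t⟫ = ⟪q, t⟫ = 0`. -/
lemma inner_pair_sums_eq_zero {E : Type*} [NormedAddCommGroup E] [InnerProductSpace ℝ E]
    {a b c d : E} (hb : ‖a‖ = ‖b‖) (hc : ‖a‖ = ‖c‖) (hd : ‖a‖ = ‖d‖) (hsum : a + b + c + d = 0) :
    ⟪a + b, a + c⟫ = 0 ∧ ⟪a + b, a + d⟫ = 0 ∧ ⟪a + c, a + d⟫ = 0 := by
  have key : ∀ x y z : E, ‖a‖ = ‖x‖ → a + x + y + z = 0 →
      ⟪a + x, a + y⟫ + ⟪a + x, a + z⟫ = 0 := by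
    intro x y z hx hs
    have hyz : (a + y) + (a + z) = a - x := by
      rw [← sub_eq_zero, ← hs]; abel
    rw [← inner_add_right, hyz]
    exact (real_inner_add_sub_eq_zero_iff a x).2 hx
  have h₁ := key b c d hb hsum
  have h₂ := key c b d hc (by rw [← hsum]; abel)
  have h₃ := key d b c hd (by rw [← hsum]; abel)
  rw [real_inner_comm (a + b) (a + c)] at h₂
  rw [real_inner_comm (a + b) (a + d), real_inner_comm (a + c) (a + d)] at h₃
  refine ⟨?_, ?_, ?_⟩ <;> linarith

open scoped RealInnerProductSpace in
lemma eq_zero_of_pairwise_orthogonal {p q t : EuclideanSpace ℝ (Fin 2)}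
    (hpq : ⟪p, q⟫ = 0) (hpt : ⟪p, t⟫ = 0) (hqt : ⟪q, t⟫ = 0) : p = 0 ∨ q = 0 ∨ t = 0 := by
  by_contra! h
  obtain ⟨hp, hq, ht⟩ := h
  have hqp : ⟪q, p⟫ = 0 := by rw [real_inner_comm, hpq]
  have htp : ⟪t, p⟫ = 0 := by rw [real_inner_comm, hpt]
  have htq : ⟪t, q⟫ = 0 := by rw [real_inner_comm, hqt]
  have hli : LinearIndependent ℝ ![p, q, t] := by
    refine linearIndependent_of_ne_zero_of_inner_eq_zero (𝕜 := ℝ) ?_ ?_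
    · intro i
      fin_cases i <;> simpa
    · intro i j hij
      fin_cases i <;> fin_cases j <;> simp_all
  have hcard := hli.fintype_card_le_finrank
  simp at hcard

/-- **Rhombus rule.** If four vectors of ℝ² have equal Euclidean norms and sum to zero,
then they pair up into two antipodal pairs. -/
theorem rhombus_rule (v₁ v₂ v₃ v₄ : EuclideanSpace ℝ (Fin 2))
    (h12 : ‖v₁‖ = ‖v₂‖) (h23 : ‖v₂‖ = ‖v₃‖) (h34 : ‖v₃‖ = ‖v₄‖)
    (hsum : v₁ + v₂ + v₃ + v₄ = 0) :
    (v₁ + v₂ = 0 ∧ v₃ + v₄ = 0) ∨ (v₁ + v₃ = 0 ∧ v₂ + v₄ = 0) ∨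
      (v₁ + v₄ = 0 ∧ v₂ + v₃ = 0) := by
  obtain ⟨hpq, hpt, hqt⟩ :=
    inner_pair_sums_eq_zero h12 (h12.trans h23) ((h12.trans h23).trans h34) hsum
  rcases eq_zero_of_pairwise_orthogonal hpq hpt hqt with h | h | h
  · refine Or.inl ⟨h, ?_⟩
    rw [← hsum, add_assoc (v₁ + v₂), h, zero_add]
  · refine Or.inr (Or.inl ⟨h, ?_⟩)
    rw [← hsum, add_right_comm v₁, add_assoc (v₁ + v₃), h, zero_add]
  · refine Or.inr (Or.inr ⟨h, ?_⟩)
    rw [← hsum, add_right_comm _ v₃, add_right_comm v₁, add_assoc (v₁ + v₄), h, zero_add]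
end

section
/- Fix a real number M > 3√2 and an integer scale i ≥ 1. For j = 1,…,4 let s_j ∈ {0,1,…,i} and let q_j be a real number compatible with s_j at scale i. Suppose q₁ + q₂ + q₃ + q₄ = 2m for some integer m. Then: (a) |m| ≤ 2; (b) if |m| = 2 then s_j = 0 for all j = 1,…,4; (c) if m ≠ 0 then s_j = 0 for at least two values of j. -/
/-!
Every compatible `q` has `|q| ≤ 1`, and a compatible `q` with nonzero sector index has
`|q| ≤ √2 M⁻ˢ ≤ √2 / M < 1/3` (`SectorCompatible.abs_lt_third`). By the triangle
inequality `2|m| ≤ |q₁| + |q₂| + |q₃| + |q₄|`. The right side is at most `4`, it is less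
than `4` as soon as one index is nonzero, and it is less than `1 + 3 · (1/3) = 2` when
at most one index vanishes.
-/

/-- A real number `q` is compatible with the sector index `s ∈ {0, 1, …, i}` at scale
`i`, for the parameter `M`: it satisfies `2/(πM) ≤ |q| ≤ 1` when `s = 0`,
`2M^{-s}/(πM) ≤ |q| ≤ √2·M^{-s}` when `1 ≤ s ≤ i-1`, and `|q| ≤ √2·M^{-i}` when
`s = i`. -/
def SectorCompatible (M : ℝ) (i s : ℕ) (q : ℝ) : Prop :=
  (s = 0 → 2 / (Real.pi * M) ≤ |q| ∧ |q| ≤ 1) ∧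
  (1 ≤ s ∧ s ≤ i - 1 →
    2 * M ^ (-(s : ℤ)) / (Real.pi * M) ≤ |q| ∧ |q| ≤ Real.sqrt 2 * M ^ (-(s : ℤ))) ∧
  (s = i → |q| ≤ Real.sqrt 2 * M ^ (-(i : ℤ)))

/-- This is where `M > 3√2` enters: it makes the bound `√2 / M` at `s = 1` less than `1/3`. -/
theorem SectorCompatible.abs_lt_third {M : ℝ} (hM : 3 * Real.sqrt 2 < M) {i s : ℕ}
    (hs : s ≤ i) {q : ℝ} (hq : SectorCompatible M i s q) (h0 : s ≠ 0) : |q| < 1 / 3 := by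
  have h2 : 1 < Real.sqrt 2 := Real.one_lt_sqrt_two
  have hM1 : 1 ≤ M := by linarith
  have hM0 : 0 < M := by linarith
  have hub : |q| ≤ Real.sqrt 2 * M ^ (-(s : ℤ)) := by
    rcases eq_or_ne s i with h | h
    · rw [h]
      exact hq.2.2 h
    · exact (hq.2.1 ⟨by omega, by omega⟩).2
  have hpow : M ^ (-(s : ℤ)) ≤ M⁻¹ := by
    rw [← zpow_neg_one]
    exact zpow_le_zpow_right₀ hM1 (by omega)
  calc |q| ≤ Real.sqrt 2 * M ^ (-(s : ℤ)) := hub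
    _ ≤ Real.sqrt 2 * M⁻¹ := by gcongr
    _ < 1 / 3 := by
      rw [← div_eq_mul_inv, div_lt_div_iff₀ hM0 (by norm_num)]
      linarith

/-- **Momentum conservation modulo the reciprocal lattice for Hubbard sectors.** Fix
`M > 3√2` and a scale `i ≥ 1`.  If `q₁, …, q₄` are compatible with sector indices
`s₁, …, s₄ ∈ {0, …, i}` at scale `i` and `q₁ + q₂ + q₃ + q₄ = 2m` with `m ∈ ℤ`, then
`|m| ≤ 2`; if `|m| = 2` then all `s_j = 0`; and if `m ≠ 0` then `s_j = 0` for at least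
two values of `j`. -/
theorem hubbard_sector_momentum_conservation (M : ℝ) (hM : 3 * Real.sqrt 2 < M)
    (i : ℕ) (hi : 1 ≤ i) (s : Fin 4 → ℕ) (hs : ∀ j, s j ≤ i)
    (q : Fin 4 → ℝ) (hq : ∀ j, SectorCompatible M i (s j) (q j))
    (m : ℤ) (hsum : q 0 + q 1 + q 2 + q 3 = 2 * m) :
    |m| ≤ 2 ∧ (|m| = 2 → ∀ j, s j = 0) ∧
      (m ≠ 0 → ∃ j k : Fin 4, j ≠ k ∧ s j = 0 ∧ s k = 0) := by
  have hsmall : ∀ j, s j ≠ 0 → |q j| < 1 / 3 := fun j => (hq j).abs_lt_third hM (hs j)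
  have hone : ∀ j, |q j| ≤ 1 := by
    intro j
    by_cases h : s j = 0
    · exact ((hq j).1 h).2
    · linarith [hsmall j h]
  have htri : 2 * |(m : ℝ)| ≤ |q 0| + |q 1| + |q 2| + |q 3| := by
    have h : |2 * (m : ℝ)| = 2 * |(m : ℝ)| := by rw [abs_mul, abs_two]
    rw [← h, ← hsum]
    linarith [abs_add_le (q 0 + q 1 + q 2) (q 3), abs_add_le (q 0 + q 1) (q 2),
      abs_add_le (q 0) (q 1)]
  have h0 := hone 0
  have h1 := hone 1
  have h2 := hone 2
  have h3 := hone 3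
  refine ⟨?_, ?_, ?_⟩
  · have h : |(m : ℝ)| ≤ 2 := by linarith
    exact_mod_cast h
  · intro hm j
    by_contra hj
    have hm' : |(m : ℝ)| = 2 := by exact_mod_cast hm
    have hlt := hsmall j hj
    fin_cases j <;> simp only [Fin.zero_eta, Fin.mk_one, Fin.reduceFinMk] at hlt <;> linarith
  · intro hm
    have hm' : (1 : ℝ) ≤ |(m : ℝ)| := by exact_mod_cast Int.one_le_abs hm
    by_contra! hne
    -- All indices but one, `j`, are nonzero; if no index vanishes, `j = 0` serves.
    obtain ⟨j, hj⟩ : ∃ j, ∀ k, j ≠ k → s k ≠ 0 := by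
      by_cases h : ∃ j, s j = 0
      · obtain ⟨j, hj⟩ := h
        exact ⟨j, fun k hk => hne j k hk hj⟩
      · exact ⟨0, fun k _ hk => h ⟨k, hk⟩⟩
    have hlt : ∀ k, j ≠ k → |q k| < 1 / 3 := fun k hk => hsmall k (hj k hk)
    fin_cases j
    · linarith [hlt 1 (by decide), hlt 2 (by decide), hlt 3 (by decide)]
    · linarith [hlt 0 (by decide), hlt 2 (by decide), hlt 3 (by decide)]
    · linarith [hlt 0 (by decide), hlt 1 (by decide), hlt 3 (by decide)]
    · linarith [hlt 0 (by decide), hlt 1 (by decide), hlt 2 (by decide)]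
end

section
/- Fix a real number M > 3π/√2 and an integer scale i ≥ 1. For j = 1,…,4 let s_j ∈ {0,1,…,i} and let q_j be a real number compatible with s_j at scale i, and suppose q₁ + q₂ + q₃ + q₄ = 0. Relabel the indices so that s₁ ≤ s₂ ≤ s₃ ≤ s₄. Then either s₁ = i, or the two smallest indices differ by at most one unit: s₂ ≤ s₁ + 1. -/
theorem SectorCompatible.le_abs {M : ℝ} {i s : ℕ} {q : ℝ} (h : SectorCompatible M i s q)
    (hs : s < i) : 2 * M ^ (-(s : ℤ)) / (Real.pi * M) ≤ |q| := by
  rcases Nat.eq_zero_or_pos s with rfl | h0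
  · simpa using (h.1 rfl).1
  · exact (h.2.1 ⟨h0, by omega⟩).1

theorem SectorCompatible.abs_le {M : ℝ} {i s : ℕ} {q : ℝ} (h : SectorCompatible M i s q)
    (h0 : 1 ≤ s) (hs : s ≤ i) : |q| ≤ Real.sqrt 2 * M ^ (-(s : ℤ)) := by
  rcases hs.eq_or_lt with rfl | hlt
  · exact h.2.2 rfl
  · exact (h.2.1 ⟨h0, by omega⟩).2

/-- **Single-slice sector momentum-conservation rule.** Fix `M > 3π/√2` and a scale
`i ≥ 1`.  If `q₁, …, q₄` are compatible with sector indices `s₁ ≤ s₂ ≤ s₃ ≤ s₄` (all in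
`{0, …, i}`) at scale `i` and `q₁ + q₂ + q₃ + q₄ = 0`, then either `s₁ = i` or the two
smallest indices differ by at most one unit: `s₂ ≤ s₁ + 1`. -/
theorem single_slice_sector_rule (M : ℝ) (hM : 3 * Real.pi / Real.sqrt 2 < M)
    (i : ℕ) (hi : 1 ≤ i) (s : Fin 4 → ℕ) (hs : ∀ j, s j ≤ i)
    (hmono : ∀ j k : Fin 4, j ≤ k → s j ≤ s k)
    (q : Fin 4 → ℝ) (hq : ∀ j, SectorCompatible M i (s j) (q j))
    (hsum : q 0 + q 1 + q 2 + q 3 = 0) :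
    s 0 = i ∨ s 1 ≤ s 0 + 1 := by
  by_contra! hcon
  obtain ⟨hne, hgap⟩ := hcon
  have hlt : s 0 < i := lt_of_le_of_ne (hs 0) hne
  have hr : 0 < Real.sqrt 2 := by positivity
  have hr2 : Real.sqrt 2 * Real.sqrt 2 = 2 := Real.mul_self_sqrt (by norm_num)
  have hr_lt : Real.sqrt 2 < 3 := by nlinarith
  have hpi := Real.pi_gt_three
  rw [div_lt_iff₀ hr] at hM
  have hM1 : 1 ≤ M := by nlinarith
  have hM0 : 0 < M := by linarith
  set x : ℝ := M ^ (-(s 0 : ℤ)) with hx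
  have hx0 : 0 < x := by positivity
  have hlow : 2 * x / (Real.pi * M) ≤ |q 0| := (hq 0).le_abs hlt
  have hup : ∀ j : Fin 4, 1 ≤ j → |q j| ≤ Real.sqrt 2 * (x / M ^ 2) := by
    intro j hj
    have h1 := hmono 1 j hj
    refine ((hq j).abs_le (by omega) (hs j)).trans ?_
    have hpow : x / M ^ 2 = M ^ (-(s 0 : ℤ) - 2) := by
      rw [zpow_sub₀ hM0.ne']
      norm_cast
    rw [hpow]
    exact mul_le_mul_of_nonneg_left (zpow_le_zpow_right₀ hM1 (by omega)) hr.le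
  have htri : |q 0| ≤ |q 1| + |q 2| + |q 3| := by
    have h0 : q 0 = -(q 1 + q 2 + q 3) := by linarith
    rw [h0, abs_neg]
    exact abs_add_three _ _ _
  have hle : 2 * x / (Real.pi * M) ≤ 3 * Real.sqrt 2 * x / M ^ 2 := by
    have h1 := hup 1 (by decide)
    have h2 := hup 2 (by decide)
    have h3 := hup 3 (by decide)
    have he : 3 * Real.sqrt 2 * x / M ^ 2 = 3 * (Real.sqrt 2 * (x / M ^ 2)) := by ring
    linarith
  rw [div_le_div_iff₀ (by positivity) (by positivity)] at hle
  have hle' : 2 * M ≤ 3 * Real.sqrt 2 * Real.pi := by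
    refine le_of_mul_le_mul_right ?_ (mul_pos hx0 hM0)
    linarith
  -- Multiplying `3π < M√2` by `√2` gives `3√2 π < 2M`.
  have hgt := mul_lt_mul_of_pos_right hM hr
  rw [mul_assoc M, hr2] at hgt
  linarith
end

section
/- Let n ≥ 1 and let M be an n×n Hermitian positive-definite complex matrix. Then ∫_{ℂⁿ} exp( − ∑_{i,j=1}^n \bar{z}_i M_{ij} z_j ) dz = πⁿ / det M, where the integral is with respect to Lebesgue measure on ℂⁿ ≅ ℝ^{2n} (and det M is a positive real number). -/
/-!
A positive-definite `M` factors as `M = Bᴴ * B` with `B` invertible, so the quadratic form at `z` is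
`∑ |w i|²` with `w = B z`. The real determinant of the complex-linear map `B` is
`|det B|² = det M` (`LinearMap.det_restrictScalars`), so the change of variables contributes the
factor `1 / det M`, and by Fubini the standard Gaussian integrates to the `n`-th power of
`∫ exp (-|w|²) = π` over `ℂ`.
-/

open scoped ComplexOrder

open MeasureTheory in
theorem integral_exp_neg_conj_mul_self :
    ∫ w : ℂ, Complex.exp (-((starRingEnd ℂ) w * w)) = Real.pi := by
  have h := GaussianFourier.integral_cexp_neg_mul_sq_norm (V := ℂ) (b := 1) (by simp)
  simpa [Complex.conj_mul'] using h

open MeasureTheory in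
theorem integral_exp_neg_sum_conj_mul_self (n : ℕ) :
    ∫ w : Fin n → ℂ, Complex.exp (-∑ i, (starRingEnd ℂ) (w i) * w i) = (Real.pi : ℂ) ^ n := by
  have h := integral_fintype_prod_volume_eq_pow (ι := Fin n)
    (fun w : ℂ => Complex.exp (-((starRingEnd ℂ) w * w)))
  rw [integral_exp_neg_conj_mul_self, Fintype.card_fin] at h
  simpa only [← Complex.exp_sum, Finset.sum_neg_distrib] using h

open scoped MatrixOrder Matrix.Norms.L2Operator in
theorem Matrix.PosDef.exists_isUnit_conjTranspose_mul_self {n : ℕ}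
    {M : Matrix (Fin n) (Fin n) ℂ} (hM : M.PosDef) :
    ∃ B : Matrix (Fin n) (Fin n) ℂ, IsUnit B ∧ M = B.conjTranspose * B :=
  CStarAlgebra.isStrictlyPositive_iff_eq_star_mul_self.mp hM.isStrictlyPositive

open MeasureTheory in
/-- Complex-linear change of variables: the Jacobian is the squared modulus of the complex
determinant. No integrability of `g` is needed, since `B` is invertible. -/
theorem integral_comp_mulVec {n : ℕ} {B : Matrix (Fin n) (Fin n) ℂ} (hB : IsUnit B)
    (g : (Fin n → ℂ) → ℂ) :
    ∫ z, g (B.mulVec z) = (∫ w, g w) / (Complex.normSq B.det : ℂ) := by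
  have hdet : B.det ≠ 0 := ((Matrix.isUnit_iff_isUnit_det B).mp hB).ne_zero
  set L : (Fin n → ℂ) →ₗ[ℝ] (Fin n → ℂ) := (Matrix.toLin' B).restrictScalars ℝ with hL
  have hLdet : LinearMap.det L = Complex.normSq B.det := by
    rw [hL, LinearMap.det_restrictScalars, LinearMap.det_toLin', Algebra.norm_complex_apply]
  have hL0 : LinearMap.det L ≠ 0 := by
    rw [hLdet]; exact (Complex.normSq_pos.mpr hdet).ne'
  have hemb : MeasurableEmbedding L :=
    (LinearEquiv.ofIsUnitDet (f := L) (v := Pi.basis fun _ => Complex.basisOneI)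
      (v' := Pi.basis fun _ => Complex.basisOneI)
      (by simpa using hL0)).toContinuousLinearEquiv.toHomeomorph.measurableEmbedding
  have h := hemb.integral_map (μ := volume) g
  rw [Measure.map_linearMap_addHaar_eq_smul_addHaar volume hL0, integral_smul_measure,
    hLdet, abs_of_nonneg (inv_nonneg.mpr (Complex.normSq_nonneg _)),
    ENNReal.toReal_ofReal (inv_nonneg.mpr (Complex.normSq_nonneg _))] at h
  change _ = ∫ z, g (B.mulVec z) at h
  rw [← h, Complex.real_smul, Complex.ofReal_inv, div_eq_inv_mul]

/-- **Complex (bosonic) Gaussian integral.** For a Hermitian positive-definite `n × n`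
complex matrix `M`,
`∫_{ℂⁿ} exp(-∑_{i,j} conj (z i) * M i j * z j) dz = πⁿ / det M`, the integral being with
respect to Lebesgue measure on `ℂⁿ`. -/
theorem complex_gaussian_integral (n : ℕ) (hn : 1 ≤ n)
    (M : Matrix (Fin n) (Fin n) ℂ) (hM : M.PosDef) :
    ∫ z : Fin n → ℂ,
        Complex.exp (-∑ i, ∑ j, (starRingEnd ℂ) (z i) * M i j * z j) =
      (Real.pi : ℂ) ^ n / M.det := by
  obtain ⟨B, hB, rfl⟩ := hM.exists_isUnit_conjTranspose_mul_self
  have hform : ∀ z : Fin n → ℂ,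
      ∑ i, ∑ j, (starRingEnd ℂ) (z i) * (B.conjTranspose * B) i j * z j =
        ∑ i, (starRingEnd ℂ) (B.mulVec z i) * B.mulVec z i := by
    intro z
    have h : star z ⬝ᵥ (B.conjTranspose * B).mulVec z = star (B.mulVec z) ⬝ᵥ B.mulVec z := by
      rw [← Matrix.mulVec_mulVec, Matrix.dotProduct_mulVec, Matrix.star_mulVec]
    have h' : star z ⬝ᵥ (B.conjTranspose * B).mulVec z =
        ∑ i, ∑ j, (starRingEnd ℂ) (z i) * (B.conjTranspose * B) i j * z j := by
      simp only [dotProduct, Matrix.mulVec, Finset.mul_sum, mul_assoc]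
      rfl
    exact h'.symm.trans h
  simp only [hform]
  rw [integral_comp_mulVec hB
      (fun w => Complex.exp (-∑ i, (starRingEnd ℂ) (w i) * w i)),
    integral_exp_neg_sum_conj_mul_self, Matrix.det_mul, Matrix.det_conjTranspose,
    Complex.normSq_eq_conj_mul_self]
  rfl
end

section
/- Let R be a commutative ring, p ≥ 1, and let A be a 2p×2p alternating matrix over R (Aᵀ = −A and all diagonal entries zero). Define the Pfaffian Pf(A) = ∑_P sgn(σ_P) ∏_{k=1}^p A_{i_k j_k}, where the sum ranges over all partitions P of {1,…,2p} into pairs written as {i_k, j_k} with i_k < j_k and i₁ < i₂ < ⋯ < i_p, and σ_P is the permutation sending (1,2,…,2p) to (i₁,j₁,i₂,j₂,…,i_p,j_p). Then det A = (Pf A)². In particular the determinant of an even-dimensional alternating matrix is a perfect square, polynomial in the entries of A. -/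
/-!
The idea is that both sides transform in the same way under congruence `A ↦ B A Bᵀ`, and that a
generic alternating matrix is congruent to the standard symplectic one.

* Let `S(A)` be the sum of `sgn σ ∏ₖ A_{σ(2k) σ(2k+1)}` over *all* permutations `σ`. Its terms do
  not change when `σ` is multiplied on the right by a permutation that permutes the pairs
  `{2k, 2k+1}` and swaps entries within pairs. Every permutation is uniquely a normal form, as
  in the definition of the Pfaffian, times such a block permutation, so `S(A) = c · Pf(A)` for a
  positive integer `c` (`sum_pfTerm`).
* `S(B A Bᵀ) = det B · S(A)` (`sum_pfTerm_congr`). Expanding the entries of `B A Bᵀ` gives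
  `∑_q (∏ₖ A_{q k}) det(B_q)`, where the columns of `B_q` are chosen among those of `B` by `q`; then
  `det(B_q) = det B · det(I_q)`, and the case `B = I` identifies `∑_q (∏ₖ A_{q k}) det(I_q)` with
  `S(A)`. In a domain of characteristic zero this gives `Pf(B A Bᵀ) = det B · Pf(A)`
  (`pfaffian_congr`).
* Over a field of characteristic zero, an invertible alternating `A` has a symplectic basis, that
  is, `B A Bᵀ = J` for some `B` and the standard `J`, with `det J = Pf J = 1`. Hence
  `(det B)² det A = 1 = (det B · Pf A)²`, and `det A = (Pf A)²`.
* The identity therefore holds for the generic alternating matrix over `ℤ[x]`, read in the fraction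
  field (its determinant is nonzero because it specializes to `det J = 1`), and every alternating
  matrix over a commutative ring is a specialization of the generic one.
-/

open scoped Matrix

/-- The **Pfaffian** of a `2p × 2p` matrix `A` over a commutative ring:
`Pf(A) = ∑_P sgn(σ_P) ∏_{k=1}^p A_{i_k j_k}`, the sum ranging over all partitions `P` of
`{1, …, 2p}` into pairs `{i_k, j_k}` with `i_k < j_k` and `i₁ < i₂ < ⋯ < i_p`, where
`σ_P` is the permutation sending `(1, 2, …, 2p)` to `(i₁, j₁, i₂, j₂, …, i_p, j_p)`.
Such partitions are encoded by the permutations `σ` satisfying `σ(2k) < σ(2k+1)` for all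
`k` and `σ(2k) < σ(2l)` for `k < l` (positions indexed from `0`). -/
def pfaffian {R : Type*} [CommRing R] (p : ℕ)
    (A : Matrix (Fin (2 * p)) (Fin (2 * p)) R) : R :=
  ∑ σ ∈ Finset.univ.filter (fun σ : Equiv.Perm (Fin (2 * p)) =>
      (∀ k : Fin p,
        σ ⟨2 * (k : ℕ), by have := k.isLt; omega⟩ <
          σ ⟨2 * (k : ℕ) + 1, by have := k.isLt; omega⟩) ∧
      (∀ k l : Fin p, k < l →
        σ ⟨2 * (k : ℕ), by have := k.isLt; omega⟩ <
          σ ⟨2 * (l : ℕ), by have := l.isLt; omega⟩)),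
    (Equiv.Perm.sign σ : ℤ) •
      ∏ k : Fin p,
        A (σ ⟨2 * (k : ℕ), by have := k.isLt; omega⟩)
          (σ ⟨2 * (k : ℕ) + 1, by have := k.isLt; omega⟩)

section

open Equiv Finset

/-! ### Normal forms and block permutations -/

/-- The position `2k + b` of the entry `b` of the pair `k`, as a bijection. -/
def pfIdx (p : ℕ) : Fin p × Fin 2 ≃ Fin (2 * p) :=
  finProdFinEquiv.trans (finCongr (Nat.mul_comm p 2))

theorem pfIdx_val (p : ℕ) (k : Fin p) (b : Fin 2) :
    (pfIdx p (k, b) : ℕ) = 2 * (k : ℕ) + (b : ℕ) := by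
  simp [pfIdx]; ring

/-- The signed product `sgn σ ∏ₖ A_{σ(2k) σ(2k+1)}` attached to a permutation `σ`. -/
def pfTerm {R : Type*} [CommRing R] (p : ℕ) (A : Matrix (Fin (2 * p)) (Fin (2 * p)) R)
    (σ : Perm (Fin (2 * p))) : R :=
  (Perm.sign σ : ℤ) • ∏ k : Fin p, A (σ (pfIdx p (k, 0))) (σ (pfIdx p (k, 1)))

/-- The permutations over which the Pfaffian is summed, one for each perfect matching. -/
def normalForms (p : ℕ) : Finset (Perm (Fin (2 * p))) :=
  univ.filter (fun σ => (∀ k : Fin p, σ (pfIdx p (k, 0)) < σ (pfIdx p (k, 1))) ∧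
    StrictMono fun k : Fin p => σ (pfIdx p (k, 0)))

theorem pfaffian_eq {R : Type*} [CommRing R] (p : ℕ)
    (A : Matrix (Fin (2 * p)) (Fin (2 * p)) R) :
    pfaffian p A = ∑ σ ∈ normalForms p, pfTerm p A σ := by
  have h0 : ∀ k : Fin p, pfIdx p (k, 0) = ⟨2 * (k : ℕ), by have := k.isLt; omega⟩ :=
    fun k => Fin.ext (by simp [pfIdx_val])
  have h1 : ∀ k : Fin p, pfIdx p (k, 1) = ⟨2 * (k : ℕ) + 1, by have := k.isLt; omega⟩ :=
    fun k => Fin.ext (by simp [pfIdx_val])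
  simp only [pfaffian, pfTerm, normalForms, StrictMono, h0, h1]

/-- The permutation `(k, b) ↦ (π k, ε k b)` of the positions attached to `g = (π, ε)`: the pairs are
permuted by `π`, and the entries of the pair `k` are rearranged by `ε k`. -/
def blockPerm {p : ℕ} (g : Perm (Fin p) × (Fin p → Perm (Fin 2))) : Perm (Fin (2 * p)) :=
  (pfIdx p).permCongr (prodCongrLeft (fun _ => g.1) * prodCongrRight g.2)

theorem blockPerm_apply {p : ℕ} (g : Perm (Fin p) × (Fin p → Perm (Fin 2))) (k : Fin p)
    (b : Fin 2) : blockPerm g (pfIdx p (k, b)) = pfIdx p (g.1 k, g.2 k b) := by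
  simp [blockPerm, Equiv.permCongr_apply]

/-- Permuting whole pairs is even, so only the swaps within pairs contribute to the sign. -/
theorem sign_blockPerm {p : ℕ} (g : Perm (Fin p) × (Fin p → Perm (Fin 2))) :
    Perm.sign (blockPerm g) = ∏ k, Perm.sign (g.2 k) := by
  rw [blockPerm, Perm.sign_permCongr, Perm.sign_mul, Perm.sign_prodCongrLeft,
    Perm.sign_prodCongrRight]
  simp

theorem perm_fin_two (ε : Perm (Fin 2)) : ε = 1 ∨ ε = swap 0 1 := by
  revert ε; decide

/-- A swap within a pair changes both the sign of `σ` and, by skew symmetry, that of one factor. -/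
theorem pfTerm_mul_blockPerm {R : Type*} [CommRing R] {p : ℕ}
    {A : Matrix (Fin (2 * p)) (Fin (2 * p)) R} (hA : Aᵀ = -A) (σ : Perm (Fin (2 * p)))
    (g : Perm (Fin p) × (Fin p → Perm (Fin 2))) :
    pfTerm p A (σ * blockPerm g) = pfTerm p A σ := by
  have hskew : ∀ i j, A j i = -A i j := fun i j => congrFun (congrFun hA i) j
  have hfac : ∀ k, A (σ (pfIdx p (g.1 k, g.2 k 0))) (σ (pfIdx p (g.1 k, g.2 k 1))) =
      ((Perm.sign (g.2 k) : ℤ) : R) *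
        A (σ (pfIdx p (g.1 k, 0))) (σ (pfIdx p (g.1 k, 1))) := by
    intro k
    rcases perm_fin_two (g.2 k) with h | h
    · simp [h]
    · rw [h, Perm.sign_swap (by decide), swap_apply_left, swap_apply_right, hskew]
      simp
  have hsq : ((∏ k, ((Perm.sign (g.2 k) : ℤ) : R)) * ∏ k, ((Perm.sign (g.2 k) : ℤ) : R)) = 1 := by
    rw [← prod_mul_distrib]
    refine prod_eq_one fun k _ => ?_
    rw [← Int.cast_mul, ← Units.val_mul, Int.units_mul_self]; simp
  simp only [pfTerm, Perm.mul_apply, blockPerm_apply, hfac, prod_mul_distrib, zsmul_eq_mul,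
    Perm.sign_mul, sign_blockPerm, Units.val_mul, Units.coe_prod, Int.cast_mul, Int.cast_prod]
  rw [Equiv.prod_comp g.1 (fun k => A (σ (pfIdx p (k, 0))) (σ (pfIdx p (k, 1))))]
  linear_combination (((Perm.sign σ : ℤ) : R) *
    ∏ k, A (σ (pfIdx p (k, 0))) (σ (pfIdx p (k, 1)))) * hsq

/-- Uniqueness of the decomposition of a permutation into a normal form and a block permutation. -/
theorem eq_of_mul_blockPerm_eq {p : ℕ} {τ τ' : Perm (Fin (2 * p))} (hτ : τ ∈ normalForms p)
    (hτ' : τ' ∈ normalForms p) {g g' : Perm (Fin p) × (Fin p → Perm (Fin 2))}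
    (h : τ * blockPerm g = τ' * blockPerm g') : τ = τ' ∧ g = g' := by
  simp only [normalForms, mem_filter, mem_univ, true_and] at hτ hτ'
  have hv : ∀ k b, τ (pfIdx p (g.1 k, g.2 k b)) = τ' (pfIdx p (g'.1 k, g'.2 k b)) := by
    intro k b
    simpa [blockPerm_apply] using DFunLike.congr_fun h (pfIdx p (k, b))
  have hε : ∀ k, g.2 k = g'.2 k := by
    intro k
    have l := hτ.1 (g.1 k)
    have l' := hτ'.1 (g'.1 k)
    have e0 := hv k 0
    have e1 := hv k 1
    rcases perm_fin_two (g.2 k) with e | e <;> rcases perm_fin_two (g'.2 k) with e' | e' <;>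
      simp only [e, e', Perm.one_apply, swap_apply_left, swap_apply_right] at e0 e1 ⊢ <;>
      · rw [e0, e1] at l
        exact absurd l l'.asymm
  have hv' : ∀ k b, τ (pfIdx p (g.1 k, b)) = τ' (pfIdx p (g'.1 k, b)) := by
    intro k b
    have := hv k ((g.2 k)⁻¹ b)
    simpa [← hε k] using this
  have hmono := (hτ.2.range_inj hτ'.2).1 (by
    rw [← g.1.surjective.range_comp, ← g'.1.surjective.range_comp (fun k => τ' (pfIdx p (k, 0)))]
    congr 1
    funext k
    exact hv' k 0)
  have hπ : g.1 = g'.1 := by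
    ext k
    have h1 := congrFun hmono (g.1 k)
    simp only [hv' k 0] at h1
    have := (pfIdx p).injective (τ'.injective h1)
    simp only [Prod.mk.injEq, and_true] at this
    rw [this]
  refine ⟨?_, Prod.ext hπ (funext hε)⟩
  obtain rfl : g = g' := Prod.ext hπ (funext hε)
  exact mul_right_cancel h

/-- Existence of the decomposition: order the entries of each pair, then sort the pairs by their
smaller entries. -/
theorem exists_mul_blockPerm_eq {p : ℕ} (σ : Perm (Fin (2 * p))) :
    ∃ τ ∈ normalForms p, ∃ g, τ * blockPerm g = σ := by
  have hflip : ∀ k : Fin p, ∃ ε : Perm (Fin 2),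
      σ (pfIdx p (k, ε 0)) < σ (pfIdx p (k, ε 1)) := by
    intro k
    have hne : σ (pfIdx p (k, 0)) ≠ σ (pfIdx p (k, 1)) := by simp
    rcases hne.lt_or_gt with h | h
    · exact ⟨1, by simpa using h⟩
    · exact ⟨swap 0 1, by simpa using h⟩
  choose ε hε using hflip
  let a : Fin p → Fin (2 * p) := fun k => σ (pfIdx p (k, ε k 0))
  have ha : Function.Injective a := fun k l h => by
    have := (pfIdx p).injective (σ.injective h)
    exact congrArg Prod.fst this
  let π := Tuple.sort a
  let g : Perm (Fin p) × (Fin p → Perm (Fin 2)) := (π⁻¹, fun k => (ε k)⁻¹)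
  have hinv : ∀ k b, (blockPerm g)⁻¹ (pfIdx p (k, b)) = pfIdx p (π k, ε (π k) b) := by
    intro k b
    rw [Perm.inv_eq_iff_eq, blockPerm_apply]
    simp [g]
  refine ⟨σ * (blockPerm g)⁻¹, ?_, g, by simp⟩
  simp only [normalForms, mem_filter, mem_univ, true_and, Perm.mul_apply, hinv]
  exact ⟨fun k => hε (π k),
    (Tuple.monotone_sort a).strictMono_of_injective (ha.comp π.injective)⟩

/-- The sum over all permutations counts each perfect matching once for each block permutation. -/
theorem sum_pfTerm {R : Type*} [CommRing R] {p : ℕ} {A : Matrix (Fin (2 * p)) (Fin (2 * p)) R}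
    (hA : Aᵀ = -A) :
    ∑ σ, pfTerm p A σ =
      (Fintype.card (Perm (Fin p) × (Fin p → Perm (Fin 2))) : R) * pfaffian p A := by
  rw [← sum_nbij (s := normalForms p ×ˢ (univ : Finset (Perm (Fin p) × (Fin p → Perm (Fin 2)))))
    (f := fun x => pfTerm p A x.1) (fun x => x.1 * blockPerm x.2) (by simp) ?_ ?_ ?_]
  · rw [sum_product, pfaffian_eq, mul_sum]
    simp
  · rintro ⟨τ, g⟩ h ⟨τ', g'⟩ h' e
    simp only [coe_product, Set.mem_prod, mem_coe] at h h'
    exact Prod.ext_iff.2 (eq_of_mul_blockPerm_eq h.1 h'.1 e)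
  · intro σ _
    obtain ⟨τ, hτ, g, e⟩ := exists_mul_blockPerm_eq σ
    exact ⟨(τ, g), by simpa using hτ, e⟩
  · rintro ⟨τ, g⟩ _
    exact (pfTerm_mul_blockPerm hA τ g).symm

/-! ### Behaviour under congruence -/

/-- Expansion of the full sum for `B A Bᵀ`. The index `q` chooses an entry of `A` for each pair; for
fixed `q` the signed sum over `σ` is the determinant of the matrix of columns of `B` chosen by `q`. -/
theorem sum_pfTerm_congr_aux {R : Type*} [CommRing R] {p : ℕ}
    (A B : Matrix (Fin (2 * p)) (Fin (2 * p)) R) :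
    ∑ σ, pfTerm p (B * A * Bᵀ) σ =
      ∑ q : Fin p → Fin (2 * p) × Fin (2 * p), (∏ k, A (q k).1 (q k).2) *
        (B.submatrix id fun i => if ((pfIdx p).symm i).2 = 0 then (q ((pfIdx p).symm i).1).1
          else (q ((pfIdx p).symm i).1).2).det := by
  have hentry : ∀ i j, (B * A * Bᵀ) i j =
      ∑ x : Fin (2 * p) × Fin (2 * p), A x.1 x.2 * (B i x.1 * B j x.2) := by
    intro i j
    simp only [Matrix.mul_apply, Matrix.transpose_apply, sum_mul]
    rw [sum_comm, Fintype.sum_prod_type]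
    exact sum_congr rfl fun _ _ => sum_congr rfl fun _ _ => by ring
  simp only [pfTerm, hentry, prod_univ_sum, Fintype.piFinset_univ, Matrix.det_apply, smul_sum,
    mul_sum]
  rw [sum_comm]
  refine sum_congr rfl fun q _ => sum_congr rfl fun σ _ => ?_
  rw [← (pfIdx p).prod_comp, Fintype.prod_prod_type, Units.smul_def, mul_smul_comm,
    prod_mul_distrib]
  simp

theorem sum_pfTerm_congr {R : Type*} [CommRing R] {p : ℕ}
    (A B : Matrix (Fin (2 * p)) (Fin (2 * p)) R) :
    ∑ σ, pfTerm p (B * A * Bᵀ) σ = B.det * ∑ σ, pfTerm p A σ := by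
  have h1 := sum_pfTerm_congr_aux A 1
  rw [Matrix.one_mul, Matrix.transpose_one, Matrix.mul_one] at h1
  rw [h1, sum_pfTerm_congr_aux, mul_sum]
  refine sum_congr rfl fun q _ => ?_
  rw [mul_left_comm, ← Matrix.det_mul]
  congr 2
  ext i j
  simp [Matrix.mul_apply, Matrix.one_apply]

theorem pfaffian_congr {R : Type*} [CommRing R] [IsDomain R] [CharZero R] {p : ℕ}
    (A B : Matrix (Fin (2 * p)) (Fin (2 * p)) R) (hA : Aᵀ = -A) :
    pfaffian p (B * A * Bᵀ) = B.det * pfaffian p A := by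
  have hB : (B * A * Bᵀ)ᵀ = -(B * A * Bᵀ) := by
    simp [Matrix.transpose_mul, hA, Matrix.mul_assoc]
  have h := sum_pfTerm_congr A B
  rw [sum_pfTerm hA, sum_pfTerm hB, mul_left_comm] at h
  exact mul_left_cancel₀ (Nat.cast_ne_zero.2 Fintype.card_ne_zero) h

/-! ### The standard symplectic matrix -/

/-- The standard symplectic matrix: `2 × 2` blocks with rows `(0, 1)` and `(-1, 0)` along the
diagonal. -/
def stdSymp (R : Type*) [CommRing R] (p : ℕ) : Matrix (Fin (2 * p)) (Fin (2 * p)) R :=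
  (Matrix.kronecker (1 : Matrix (Fin p) (Fin p) R) !![0, 1; -1, 0]).submatrix
    (pfIdx p).symm (pfIdx p).symm

theorem stdSymp_apply (R : Type*) [CommRing R] (p : ℕ) (k l : Fin p) (a b : Fin 2) :
    stdSymp R p (pfIdx p (k, a)) (pfIdx p (l, b)) =
      (1 : Matrix (Fin p) (Fin p) R) k l * (!![0, 1; -1, 0] : Matrix (Fin 2) (Fin 2) R) a b := by
  simp [stdSymp]

theorem det_stdSymp (R : Type*) [CommRing R] (p : ℕ) : (stdSymp R p).det = 1 := by
  simp [stdSymp, Matrix.det_submatrix_equiv_self, Matrix.kronecker, Matrix.det_kronecker,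
    Matrix.det_fin_two]

theorem transpose_stdSymp (R : Type*) [CommRing R] (p : ℕ) : (stdSymp R p)ᵀ = -stdSymp R p := by
  ext i j
  obtain ⟨⟨k, a⟩, rfl⟩ := (pfIdx p).surjective i
  obtain ⟨⟨l, b⟩, rfl⟩ := (pfIdx p).surjective j
  rw [Matrix.transpose_apply, Matrix.neg_apply, stdSymp_apply, stdSymp_apply, Matrix.one_apply,
    Matrix.one_apply]
  fin_cases a <;> fin_cases b <;> simp [eq_comm]

theorem stdSymp_diag (R : Type*) [CommRing R] (p : ℕ) (i : Fin (2 * p)) : stdSymp R p i i = 0 := by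
  obtain ⟨⟨k, a⟩, rfl⟩ := (pfIdx p).surjective i
  rw [stdSymp_apply]
  fin_cases a <;> simp

/-- Only the identity contributes: a nonzero product forces each pair to be mapped onto a pair, and a
normal form preserves the order within and among pairs. -/
theorem pfaffian_stdSymp (R : Type*) [CommRing R] (p : ℕ) : pfaffian p (stdSymp R p) = 1 := by
  rw [pfaffian_eq, sum_eq_single (1 : Perm (Fin (2 * p)))]
  · simp [pfTerm, stdSymp_apply]
  · intro σ hσ hne
    simp only [normalForms, mem_filter, mem_univ, true_and] at hσ
    rw [pfTerm]
    by_contra hprod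
    have hfac : ∀ k, stdSymp R p (σ (pfIdx p (k, 0))) (σ (pfIdx p (k, 1))) ≠ 0 :=
      fun k h => hprod (by rw [prod_eq_zero (mem_univ k) h, smul_zero])
    have hpair : ∀ k, ∃ m, ∀ b, σ (pfIdx p (k, b)) = pfIdx p (m, b) := by
      intro k
      have h1 := hfac k
      have h2 := hσ.1 k
      obtain ⟨⟨m, a⟩, hm⟩ := (pfIdx p).surjective (σ (pfIdx p (k, 0)))
      obtain ⟨⟨n, b⟩, hn⟩ := (pfIdx p).surjective (σ (pfIdx p (k, 1)))
      rw [← hm, ← hn, stdSymp_apply] at h1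
      rw [← hm, ← hn, Fin.lt_def, pfIdx_val, pfIdx_val] at h2
      have hmn : m = n := by
        by_contra hmn
        simp [hmn] at h1
      subst hmn
      obtain ⟨rfl, rfl⟩ : a = 0 ∧ b = 1 := by omega
      exact ⟨m, fun c => by fin_cases c <;> simp [hm, hn]⟩
    choose m hm using hpair
    have hmono : StrictMono m := by
      intro k l hkl
      have := hσ.2 hkl
      simp only [hm, Fin.lt_def, pfIdx_val] at this
      rw [Fin.lt_def]; omega
    have hid : m = id := (hmono.range_inj strictMono_id).1
      (by rw [(Finite.surjective_of_injective hmono.injective).range_eq, Set.range_id])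
    refine hne (Equiv.ext fun i => ?_)
    obtain ⟨⟨k, b⟩, rfl⟩ := (pfIdx p).surjective i
    simp [hm, hid]
  · intro h
    refine absurd ?_ h
    simp only [normalForms, mem_filter, mem_univ, true_and, StrictMono, Perm.one_apply,
      Fin.lt_def, pfIdx_val]
    exact ⟨fun k => by simp, fun k l h => by simpa using h⟩

/-! ### Symplectic bases -/

/-- The first `m` pairs of a symplectic basis. A new vector `u` is taken orthogonal to the pairs
already found, which is possible by counting dimensions; its partner `w'` is obtained from any `w`
with `ω u w ≠ 0` by projecting away from these pairs and rescaling. -/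
theorem exists_symplectic_family {K V : Type*} [Field K] [AddCommGroup V] [Module K V]
    [FiniteDimensional K V] (ω : V →ₗ[K] V →ₗ[K] K) (halt : ω.IsAlt)
    (hnd : ∀ u, u ≠ 0 → ∃ w, ω u w ≠ 0) (m : ℕ) (hm : 2 * m ≤ Module.finrank K V) :
    ∃ a b : Fin m → V, (∀ i j, ω (a i) (a j) = 0) ∧ (∀ i j, ω (b i) (b j) = 0) ∧
      ∀ i j, ω (a i) (b j) = if i = j then 1 else 0 := by
  induction m with
  | zero => exact ⟨Fin.elim0, Fin.elim0, fun i => i.elim0, fun i => i.elim0, fun i => i.elim0⟩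
  | succ m ih =>
    obtain ⟨a, b, haa, hbb, hab⟩ := ih (by omega)
    have hba : ∀ i j, ω (b i) (a j) = -if i = j then 1 else 0 := by
      intro i j
      rw [← halt.neg (a j) (b i), hab]; simp [eq_comm]
    let L : V →ₗ[K] (Fin m ⊕ Fin m → K) :=
      LinearMap.pi (Sum.elim (fun i => ω (a i)) fun i => ω (b i))
    obtain ⟨u, hu, hu0⟩ := (Submodule.ne_bot_iff _).1 (LinearMap.ker_ne_bot_of_finrank_lt
      (f := L) (by simp; omega))
    have hau : ∀ i, ω (a i) u = 0 := fun i => congrFun (LinearMap.mem_ker.1 hu) (Sum.inl i)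
    have hbu : ∀ i, ω (b i) u = 0 := fun i => congrFun (LinearMap.mem_ker.1 hu) (Sum.inr i)
    have hua : ∀ i, ω u (a i) = 0 := fun i => by rw [← halt.neg, hau, neg_zero]
    have hub : ∀ i, ω u (b i) = 0 := fun i => by rw [← halt.neg, hbu, neg_zero]
    obtain ⟨w, hw⟩ := hnd u hu0
    let w' : V := (ω u w)⁻¹ • (w - (∑ i, ω (a i) w • b i) + ∑ i, ω (b i) w • a i)
    have haw : ∀ i, ω (a i) w' = 0 := fun i => by simp [w', haa, hab]
    have hbw : ∀ i, ω (b i) w' = 0 := fun i => by simp [w', hbb, hba]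
    have huw : ω u w' = 1 := by simp [w', hua, hub, hw]
    have hwa : ∀ i, ω w' (a i) = 0 := fun i => by rw [← halt.neg, haw, neg_zero]
    have hwb : ∀ i, ω w' (b i) = 0 := fun i => by rw [← halt.neg, hbw, neg_zero]
    refine ⟨Fin.cons u a, Fin.cons w' b, ?_, ?_, ?_⟩ <;> intro i j <;>
      refine Fin.cases ?_ (fun i => ?_) i <;> refine Fin.cases ?_ (fun j => ?_) j <;>
      simp [halt.self_eq_zero, *, Fin.succ_ne_zero, (Fin.succ_ne_zero _).symm]

theorem exists_mul_mul_transpose_eq_stdSymp {K : Type*} [Field K] [CharZero K]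
    {p : ℕ} (A : Matrix (Fin (2 * p)) (Fin (2 * p)) K) (hA : Aᵀ = -A)
    (hdet : A.det ≠ 0) : ∃ B, B * A * Bᵀ = stdSymp K p := by
  have hω : ∀ x y, Matrix.toLinearMap₂' (S₁ := K) (S₂ := K) K A x y = x ⬝ᵥ A.mulVec y := fun x y =>
    Matrix.toLinearMap₂'_apply' A x y
  have halt : (Matrix.toLinearMap₂' (S₁ := K) (S₂ := K) K A).IsAlt := by
    intro x
    have h : x ⬝ᵥ A.mulVec x = -(x ⬝ᵥ A.mulVec x) := by
      conv_lhs => rw [Matrix.dotProduct_mulVec, ← Matrix.mulVec_transpose, hA, Matrix.neg_mulVec,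
        neg_dotProduct, dotProduct_comm]
    rw [hω]
    exact self_eq_neg.1 h
  obtain ⟨a, b, haa, hbb, hab⟩ := exists_symplectic_family
    (Matrix.toLinearMap₂' (S₁ := K) (S₂ := K) K A) halt (by
    intro u hu
    by_contra! h
    refine hu (Matrix.eq_zero_of_vecMul_eq_zero hdet (dotProduct_eq_zero _ fun w => ?_))
    rw [← Matrix.dotProduct_mulVec, ← hω, h]) p (by simp)
  have hba : ∀ i j, Matrix.toLinearMap₂' K A (b i) (a j) = -if i = j then 1 else 0 := by
    intro i j
    rw [← halt.neg (a j) (b i), hab]; simp [eq_comm]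
  -- The rows of `B` are the vectors `a k` and `b k`, alternately.
  let B : Matrix (Fin (2 * p)) (Fin (2 * p)) K :=
    Matrix.of fun i => (if ((pfIdx p).symm i).2 = 0 then a else b) ((pfIdx p).symm i).1
  have hB : ∀ k c, B (pfIdx p (k, c)) = (if c = 0 then a else b) k := fun k c => by
    change (if ((pfIdx p).symm (pfIdx p (k, c))).2 = 0 then a else b)
      ((pfIdx p).symm (pfIdx p (k, c))).1 = _
    rw [Equiv.symm_apply_apply]
  refine ⟨B, ?_⟩
  have hentry : ∀ i j, (B * A * Bᵀ) i j = Matrix.toLinearMap₂' K A (B i) (B j) := by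
    intro i j
    rw [hω, Matrix.mul_assoc]
    rfl
  ext i j
  obtain ⟨⟨k, c⟩, rfl⟩ := (pfIdx p).surjective i
  obtain ⟨⟨l, d⟩, rfl⟩ := (pfIdx p).surjective j
  rw [hentry, hB, hB, stdSymp_apply, Matrix.one_apply]
  fin_cases c <;> fin_cases d <;> simp [haa, hbb, hab, hba]

theorem det_eq_pfaffian_sq_of_field {K : Type*} [Field K] [CharZero K] {p : ℕ}
    (A : Matrix (Fin (2 * p)) (Fin (2 * p)) K) (hA : Aᵀ = -A) (hdet : A.det ≠ 0) :
    A.det = (pfaffian p A) ^ 2 := by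
  obtain ⟨B, hB⟩ := exists_mul_mul_transpose_eq_stdSymp A hA hdet
  have h1 := congrArg Matrix.det hB
  have h2 := pfaffian_congr A B hA
  rw [hB, pfaffian_stdSymp] at h2
  rw [Matrix.det_mul, Matrix.det_mul, Matrix.det_transpose, det_stdSymp] at h1
  have hB0 : B.det ≠ 0 := left_ne_zero_of_mul (h2 ▸ one_ne_zero)
  apply mul_left_cancel₀ (pow_ne_zero 2 hB0)
  linear_combination h1 + (1 + B.det * pfaffian p A) * h2

theorem pfaffian_map {R S : Type*} [CommRing R] [CommRing S] (f : R →+* S) {p : ℕ}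
    (A : Matrix (Fin (2 * p)) (Fin (2 * p)) R) :
    pfaffian p (A.map f) = f (pfaffian p A) := by
  simp [pfaffian, map_sum, map_prod]

/-! ### The generic alternating matrix -/

open MvPolynomial in
/-- The generic alternating matrix over `ℤ[x]`; only the variables `X (i, j)` with `i < j` occur. -/
noncomputable def genericAlt (p : ℕ) : Matrix (Fin (2 * p)) (Fin (2 * p))
    (MvPolynomial (Fin (2 * p) × Fin (2 * p)) ℤ) :=
  Matrix.of fun i j => if i < j then X (i, j) else if j < i then -X (j, i) else 0

theorem genericAlt_map {R : Type*} [CommRing R] {p : ℕ} (A : Matrix (Fin (2 * p)) (Fin (2 * p)) R)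
    (hA : Aᵀ = -A) (hdiag : ∀ i, A i i = 0) :
    (genericAlt p).map (MvPolynomial.eval₂Hom (Int.castRingHom R) fun x => A x.1 x.2) = A := by
  ext i j
  have hskew : A j i = -A i j := congrFun (congrFun hA i) j
  rcases lt_trichotomy i j with h | rfl | h
  · simp [genericAlt, h]
  · simp [genericAlt, hdiag]
  · simp [genericAlt, h, h.not_gt, hskew]

theorem det_genericAlt (p : ℕ) : (genericAlt p).det = (pfaffian p (genericAlt p)) ^ 2 := by
  have hdet : (genericAlt p).det ≠ 0 := by
    intro h
    have h1 := det_stdSymp ℤ p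
    rw [← genericAlt_map (stdSymp ℤ p) (transpose_stdSymp ℤ p) (stdSymp_diag ℤ p),
      ← RingHom.mapMatrix_apply, ← RingHom.map_det, h, map_zero] at h1
    exact zero_ne_one h1
  let f := algebraMap (MvPolynomial (Fin (2 * p) × Fin (2 * p)) ℤ)
    (FractionRing (MvPolynomial (Fin (2 * p) × Fin (2 * p)) ℤ))
  have hf : Function.Injective f := IsFractionRing.injective _ _
  have hc : CharZero (FractionRing (MvPolynomial (Fin (2 * p) × Fin (2 * p)) ℤ)) :=
    charZero_of_injective_algebraMap hf
  have hm : ((genericAlt p).map f).det = f (genericAlt p).det := by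
    rw [RingHom.map_det, RingHom.mapMatrix_apply]
  have key := det_eq_pfaffian_sq_of_field ((genericAlt p).map f) ?_ ?_
  · rw [hm, pfaffian_map, ← map_pow] at key
    exact hf key
  · ext i j
    rcases lt_trichotomy i j with h | rfl | h <;> simp [genericAlt, *, not_lt_of_gt]
  · rw [hm]
    exact fun h => hdet (hf (h.trans (map_zero f).symm))

end

/-- **The determinant of an alternating matrix is the square of its Pfaffian.** For any
`2p × 2p` alternating matrix `A` (i.e. `Aᵀ = -A` with zero diagonal) over a commutative
ring, `det A = (Pf A)²`. -/
theorem det_eq_pfaffian_sq {R : Type*} [CommRing R] (p : ℕ) (hp : 1 ≤ p)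
    (A : Matrix (Fin (2 * p)) (Fin (2 * p)) R)
    (hA : Aᵀ = -A) (hdiag : ∀ i, A i i = 0) :
    A.det = (pfaffian p A) ^ 2 := by
  have h := congrArg (MvPolynomial.eval₂Hom (Int.castRingHom R) fun x => A x.1 x.2)
    (det_genericAlt p)
  rwa [RingHom.map_det, RingHom.mapMatrix_apply, map_pow, ← pfaffian_map,
    genericAlt_map A hA hdiag] at h
end
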